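/- Let n ≥ 2 and let 𝒜 = {[A₁],…,[A_r]} be a malnormal subgroup system of F_n, with L, Γ_i, 𝒞 and F_n − 𝒜 as in the context. Let η : F_n − 𝒜 → ℝ≥0 be a function such that η(w) = η(w⁻¹) for every w ∈ F_n − 𝒜, and such that for every w ∈ F_n − 𝒜 one has η(w) = Σ_{v a length-one extension of w} η(v). Then there exists a unique relative current η̃ on (F_n,𝒜) such that η̃(C(γ_w)) = η(w) for every w ∈ F_n − 𝒜. -/

import Mathlib

/-!
A segment `[P, Q]` of the Cayley tree has label `P⁻¹ * Q`; its box `Zset P Q` is the set of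
bi-infinite geodesics that contain it, so that `C(γ_w)` is the box of `[1, w]` and boxes are
permuted by the action (`cylinder_eq_Zset`, `dbAct_mem_Zset`).

The space `∂²(F_n, 𝒜)` is the union of the boxes of segments with label in `F_n − 𝒜`. If no
subword of a long segment is in `𝒞`, then each of its windows of length `L + 2` lies in some `T_B`
with `[B] ∈ 𝒜`; consecutive windows overlap in length `L + 1 > diam (T_B ∩ T_B')`, so a single `B`
serves the whole segment (`exists_tree_of_notMem_FmA`). A geodesic all of whose segments are of
this kind therefore has both endpoints in one `∂B`, and lies in `∂²𝒜` (`exists_good`). Conversely a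
geodesic with both endpoints in `∂B` runs inside `T_B`, so none of its segments has a label in
`F_n − 𝒜` (`Zset_subset_relSet`). Boxes of segments whose endpoints have equal length are nested or
disjoint, hence form a countable π-system of compact open sets which is a basis of the topology
(`isPiSystem_boxes`, `isTopologicalBasis_boxes`). Since the value of an invariant measure on the
box of `[P, Q]` is its value on the cylinder of `P⁻¹ * Q`, uniqueness follows from the π-λ theorem
(`measure_ext_boxes`, `measure_Zrel`).

For existence, iterating the additivity relation at both ends of a segment, with the help of the
symmetry of `η`, shows that `η (P⁻¹ * Q)` is the sum of `η (p⁻¹ * q)` over the pairs `p, q` on the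
sphere of radius `M` whose geodesic runs through `[P, Q]` (`sum_sum_shadow`). Hence the Riemann sums
`rsum` over the boxes of level `M`, where a box has mass `η (p⁻¹ * q)`, take the constant value
`η (P⁻¹ * Q)` on the indicator function of a box for all large `M` (`rsum_indicator`), and are
bounded on each compactly supported function (`exists_rsum_bound`). Their limit along a
nonprincipal ultrafilter is a positive functional on `C_c`, and its Riesz measure has the prescribed
values on boxes (`exists_measure`). These values are invariant under translation, so the measure
is invariant by the uniqueness part.
-/

open scoped Classical
open MeasureTheory

noncomputable section

namespace RelCurr

/-- The alphabet `𝔄 = ℬ ∪ ℬ⁻¹`: a letter is a generator together with a sign. -/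
abbrev Letter (n : ℕ) := Fin n × Bool

/-- The inverse of a letter. -/
def linv {n : ℕ} (x : Letter n) : Letter n := (x.1, !x.2)

/-- The free group of rank `n` on the basis `Fin n`. -/
abbrev F (n : ℕ) := FreeGroup (Fin n)

/-- The reduced word of an element of `F n`. -/
def rword {n : ℕ} (g : F n) : List (Letter n) := FreeGroup.toWord g

/-- The length `|g|` of the reduced word of `g`. -/
def wlen {n : ℕ} (g : F n) : ℕ := (rword g).length

/-- The single-letter element of `F n` given by a letter. -/
def letterE {n : ℕ} (b : Letter n) : F n := FreeGroup.mk [b]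

/-- The conjugate subgroup `g A g⁻¹`. -/
def conjSub {n : ℕ} (g : F n) (A : Subgroup (F n)) : Subgroup (F n) :=
  Subgroup.map (MulAut.conj g).toMonoidHom A

/-- A subgroup `A` is malnormal if `xAx⁻¹ ∩ A = {1}` for every `x ∉ A`. -/
def Malnormal {n : ℕ} (A : Subgroup (F n)) : Prop :=
  ∀ x : F n, x ∉ A → conjSub x A ⊓ A = ⊥

/-- The word metric on the Cayley tree `T`. -/
def dist' {n : ℕ} (x y : F n) : ℕ := wlen (x⁻¹ * y)

/-- The cyclically reduced length of `a`. -/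
def cycLen {n : ℕ} (a : F n) : ℕ := sInf { m | ∃ h : F n, wlen (h⁻¹ * a * h) = m }

/-- The vertex set of the minimal `A`-invariant subtree `T_A` of the Cayley tree:
the union of the axes of the nontrivial elements of `A`. -/
def treeVerts {n : ℕ} (A : Subgroup (F n)) : Set (F n) :=
  { h | ∃ a ∈ A, a ≠ 1 ∧ wlen (h⁻¹ * a * h) = cycLen a }

/-- `γ_w ⊆ S`: every prefix of the reduced word of `w` lies in the vertex set `S`. -/
def pathIn {n : ℕ} (w : F n) (S : Set (F n)) : Prop :=
  ∀ m ≤ wlen w, FreeGroup.mk ((rword w).take m) ∈ S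

/-- An element is cyclically reduced if the last letter of its reduced word is not the
inverse of the first letter. -/
def CyclicallyReduced {n : ℕ} (w : F n) : Prop :=
  ∀ x y : Letter n, (rword w).head? = some x → (rword w).getLast? = some y → y ≠ linv x

/-- `v` is a length-one extension of `w`. -/
def LengthOneExt {n : ℕ} (w v : F n) : Prop :=
  ∃ b : Letter n, v = w * letterE b ∧ wlen v = wlen w + 1

/-- `a` is an extension of `w`: the reduced word of `w` is a proper prefix of that of `a`. -/
def ExtensionOf {n : ℕ} (w a : F n) : Prop :=
  rword w <+: rword a ∧ wlen w < wlen a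

/-- `g` is a proper power. -/
def IsProperPower {n : ℕ} (g : F n) : Prop := ∃ (h : F n) (k : ℕ), 2 ≤ k ∧ g = h ^ k

section System

variable {n r : ℕ} (A : Fin r → Subgroup (F n))

/-- `[B] ∈ 𝒜`, i.e. `B` is a conjugate of one of the subgroups of the system. -/
def InSystem (B : Subgroup (F n)) : Prop := ∃ (i : Fin r) (g : F n), B = conjSub g (A i)

/-- The family `A` represents a subgroup system: finite rank subgroups distinct
from `{1}` and `F n`. -/
def IsSystem : Prop := (∀ i, (A i).FG) ∧ (∀ i, A i ≠ ⊥) ∧ (∀ i, A i ≠ ⊤)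

/-- The subgroup system is malnormal. -/
def SystemMalnormal : Prop :=
  (∀ i, Malnormal (A i)) ∧
  ∀ B₁ B₂ : Subgroup (F n), InSystem A B₁ → InSystem A B₂ → B₁ ≠ B₂ → B₁ ⊓ B₂ = ⊥

/-- `g` is `𝒜`-peripheral: trivial or contained in a conjugate of one of the `A i`. -/
def Peripheral (g : F n) : Prop := g = 1 ∨ ∃ B, InSystem A B ∧ g ∈ B

/-- The diameter of the intersection of the trees of two distinct subgroups of the
system is at most `L`. -/
def DiamBound (L : ℕ) : Prop :=
  ∀ B₁ B₂ : Subgroup (F n), InSystem A B₁ → InSystem A B₂ → B₁ ≠ B₂ →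
    ∀ x ∈ treeVerts B₁ ∩ treeVerts B₂, ∀ y ∈ treeVerts B₁ ∩ treeVerts B₂, dist' x y ≤ L

/-- `B ∈ Γ_i`: `B` is a conjugate of `A i` whose tree contains the base point `1`. -/
def GammaMem (i : Fin r) (B : Subgroup (F n)) : Prop :=
  (∃ g : F n, B = conjSub g (A i)) ∧ (1 : F n) ∈ treeVerts B

/-- The finite set `𝒞` of words of length `L+2` whose path is contained in no tree
`T_B` with `B ∈ Γ_i`, for every `i`. -/
def Ccal (L : ℕ) : Set (F n) :=
  { w | wlen w = L + 2 ∧ ∀ (i : Fin r) (B : Subgroup (F n)), GammaMem A i B →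
      ¬ pathIn w (treeVerts B) }

/-- `F_n − 𝒜`: the words containing an element of `𝒞` as a contiguous subword. -/
def FmA (L : ℕ) : Set (F n) := { w | ∃ x ∈ Ccal A L, rword x <:+: rword w }

/-- `S_k`: words of length `k` not containing any element of `𝒞` as a subword. -/
def Sk (L k : ℕ) : Set (F n) := { w | wlen w = k ∧ w ∉ FmA A L }

end System

/-! ### The boundary of `F n` -/

/-- An infinite reduced word. -/
def IsRed {n : ℕ} (ξ : ℕ → Letter n) : Prop := ∀ i, ξ (i + 1) ≠ linv (ξ i)

/-- The Gromov boundary `∂F_n`, realized as the space of infinite reduced words,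
topologized as a subspace of the product space. -/
def Boundary (n : ℕ) : Type := { ξ : ℕ → Letter n // IsRed ξ }

instance {n : ℕ} : TopologicalSpace (Boundary n) :=
  instTopologicalSpaceSubtype

/-- The length-`m` prefix of a boundary point. -/
def bpre {n : ℕ} (ξ : Boundary n) (m : ℕ) : List (Letter n) :=
  (List.range m).map ξ.1

/-- The reduced word of `w` is a prefix of the infinite word `ξ`. -/
def wordPrefixOf {n : ℕ} (w : F n) (ξ : Boundary n) : Prop :=
  bpre ξ (wlen w) = rword w

/-- The boundary (limit set) `∂A ⊆ ∂F_n` of a subgroup `A`. -/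
def limitSet {n : ℕ} (A : Subgroup (F n)) : Set (Boundary n) :=
  { ξ | ∀ m : ℕ, ∃ a ∈ A, bpre ξ m <+: rword a }

/-- `ξ = g^{+∞}`: `ξ` is the limit of the reduced words of the powers of `g`. -/
def IsPosLimit {n : ℕ} (g : F n) (ξ : Boundary n) : Prop :=
  ∀ m : ℕ, ∃ N : ℕ, ∀ k ≥ N, bpre ξ m <+: rword (g ^ k)

/-- The number of letters cancelled when concatenating the word `l` with the
infinite reduced word `ξ`. -/
def cancelLen {n : ℕ} (l : List (Letter n)) (ξ : ℕ → Letter n) : ℕ :=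
  sSup { j | j ≤ l.length ∧ ∀ i < j, l.reverse[i]? = some (linv (ξ i)) }

/-- The sequence underlying the action of `g` on a boundary point: left multiplication
followed by cancellation. -/
def actSeq {n : ℕ} (g : F n) (ξ : ℕ → Letter n) : ℕ → Letter n :=
  fun m =>
    if h : m < (rword g).length - cancelLen (rword g) ξ then
      (rword g).get ⟨m, by omega⟩
    else ξ (m - ((rword g).length - cancelLen (rword g) ξ) + cancelLen (rword g) ξ)

/-- The action of `F n` on its boundary: left multiplication followed by cancellation.
(The sequence `actSeq g ξ.1` is always reduced, so the first branch always applies.) -/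
def bAct {n : ℕ} (g : F n) (ξ : Boundary n) : Boundary n :=
  if h : IsRed (actSeq g ξ.1) then ⟨actSeq g ξ.1, h⟩ else ξ

/-! ### The double boundary -/

/-- The diagonal action of `F n` on `Sym2 (∂F_n)`, whose restriction to the set of
non-diagonal classes is the action on the double boundary `∂²F_n`. -/
def dbAct {n : ℕ} (g : F n) : Sym2 (Boundary n) → Sym2 (Boundary n) := Sym2.map (bAct g)

/-- `∂²𝒜`: the classes `{ξ,η}` with both endpoints in `g·∂A_i = ∂(gA_ig⁻¹)` for some
`i` and `g`. -/
def dblBndA {n r : ℕ} (A : Fin r → Subgroup (F n)) : Set (Sym2 (Boundary n)) :=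
  { z | ∃ (i : Fin r) (g : F n) (ξ η : Boundary n), z = s(ξ, η) ∧
      ξ ∈ limitSet (conjSub g (A i)) ∧ η ∈ limitSet (conjSub g (A i)) }

/-- The double boundary `∂²(F_n,𝒜)` of `F n` relative to `𝒜`, as a subset of
`Sym2 (∂F_n)`: non-diagonal classes not lying in `∂²𝒜`. -/
def relSet {n r : ℕ} (A : Fin r → Subgroup (F n)) : Set (Sym2 (Boundary n)) :=
  { z | ¬ z.IsDiag } \ dblBndA A

/-- The cylinder set `C(γ_w) ⊆ ∂²F_n` of the geodesic path from `1` to `w`. -/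
def cylinder {n : ℕ} (w : F n) : Set (Sym2 (Boundary n)) :=
  { z | ∃ ξ η : Boundary n, z = s(ξ, η) ∧ ξ.1 0 ≠ η.1 0 ∧
      (wordPrefixOf w ξ ∨ wordPrefixOf w η) }

instance {n : ℕ} : MeasurableSpace (Sym2 (Boundary n)) := borel _

/-- The action of `g ∈ F n` on `∂²(F_n,𝒜)`. (The action of `F n` preserves
`∂²(F_n,𝒜)`, so the first branch always applies.) -/
def relAct {n r : ℕ} (A : Fin r → Subgroup (F n)) (g : F n) (z : ↥(relSet A)) :
    ↥(relSet A) :=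
  if h : dbAct g z.1 ∈ relSet A then ⟨dbAct g z.1, h⟩ else z

/-- The cylinder `C(γ_w)` as a subset of `∂²(F_n,𝒜)`. -/
def relCyl {n r : ℕ} (A : Fin r → Subgroup (F n)) (w : F n) : Set ↥(relSet A) :=
  Subtype.val ⁻¹' cylinder w

/-- The translated cylinder `g·C(γ_w)` as a subset of `∂²(F_n,𝒜)`. -/
def relCylG {n r : ℕ} (A : Fin r → Subgroup (F n)) (g w : F n) : Set ↥(relSet A) :=
  Subtype.val ⁻¹' (dbAct g '' cylinder w)

/-- A relative current on `(F_n,𝒜)`: an `F_n`-invariant Radon measure on the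
locally compact space `∂²(F_n,𝒜)` (finite on compacts, outer regular, inner regular
on open sets). -/
def IsRelCurrent {n r : ℕ} (A : Fin r → Subgroup (F n)) (μ : Measure ↥(relSet A)) : Prop :=
  (∀ (g : F n) (s : Set ↥(relSet A)), MeasurableSet s → μ (relAct A g ⁻¹' s) = μ s) ∧
  μ.Regular

/-- The `F_n`-orbit of a point of `Sym2 (∂F_n)`, inside `∂²(F_n,𝒜)`. -/
def orbitOf {n r : ℕ} (A : Fin r → Subgroup (F n)) (z : Sym2 (Boundary n)) :
    Set ↥(relSet A) :=
  { y | ∃ h : F n, (y : Sym2 (Boundary n)) = dbAct h z }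

/-! ### Reduced words and first letters -/

section Words

variable {n : ℕ}

/-- The first letter of the reduced word of `g`, and `none` for `g = 1`. In the Cayley tree,
`firstL (v⁻¹ * x)` is the direction in which `x` is seen from the vertex `v`; the geometry of the
tree is expressed through these directions. -/
def firstL (g : F n) : Option (Letter n) := (rword g).head?

lemma rword_mk_of_isReduced {l : List (Letter n)} (h : FreeGroup.IsReduced l) :
    rword (FreeGroup.mk l) = l := by
  rw [rword, FreeGroup.toWord_mk, h.reduce_eq]

lemma isReduced_rword (g : F n) : FreeGroup.IsReduced (rword g) := FreeGroup.isReduced_toWord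

lemma mk_rword (g : F n) : FreeGroup.mk (rword g) = g := FreeGroup.mk_toWord

lemma rword_one : rword (1 : F n) = [] := FreeGroup.toWord_one

lemma wlen_one : wlen (1 : F n) = 0 := by simp [wlen, rword_one]

lemma wlen_inv (g : F n) : wlen g⁻¹ = wlen g := FreeGroup.norm_inv_eq

lemma wlen_eq_zero {g : F n} : wlen g = 0 ↔ g = 1 := FreeGroup.norm_eq_zero

lemma wlen_mul_le (g h : F n) : wlen (g * h) ≤ wlen g + wlen h := FreeGroup.norm_mul_le g h

lemma wlen_mk_le (l : List (Letter n)) : wlen (FreeGroup.mk l) ≤ l.length := FreeGroup.norm_mk_le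

lemma wlen_inv_mul_comm (g h : F n) : wlen (g⁻¹ * h) = wlen (h⁻¹ * g) := by
  rw [← wlen_inv (g⁻¹ * h)]; simp

lemma firstL_one : firstL (1 : F n) = none := by simp [firstL, rword_one]

lemma firstL_eq_none {g : F n} : firstL g = none ↔ g = 1 := by
  simp [firstL, rword, FreeGroup.toWord_eq_nil_iff]

lemma linv_linv (x : Letter n) : linv (linv x) = x := by simp [linv]

lemma linv_ne (x : Letter n) : linv x ≠ x := by
  intro h; simp [linv, Prod.ext_iff] at h

lemma reduced_pair_iff (a b : Letter n) : (a.1 = b.1 → a.2 = b.2) ↔ b ≠ linv a := by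
  obtain ⟨a, s⟩ := a
  obtain ⟨b, t⟩ := b
  simp only [linv, ne_eq, Prod.mk.injEq]
  cases s <;> cases t <;> simp <;> tauto

lemma getLast?_rword_inv (g : F n) : (rword g⁻¹).getLast? = (firstL g).map linv := by
  rw [rword, FreeGroup.toWord_inv, firstL, rword, FreeGroup.invRev, List.getLast?_reverse,
    List.head?_map]
  rfl

/-- If `u` and `v` are seen in different directions from `1`, then the geodesic from `u` to `v`
passes through `1`. -/
lemma rword_inv_mul {u v : F n} (h : firstL u ≠ firstL v) :
    rword (u⁻¹ * v) = rword u⁻¹ ++ rword v := by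
  rw [rword, FreeGroup.toWord_mul]
  apply FreeGroup.IsReduced.reduce_eq
  apply List.IsChain.append FreeGroup.isReduced_toWord FreeGroup.isReduced_toWord
  intro x hx y hy
  rw [reduced_pair_iff]
  have h1 := getLast?_rword_inv u
  rw [rword] at h1
  rw [h1] at hx
  rw [Option.mem_def, Option.map_eq_some_iff] at hx
  obtain ⟨a, ha, rfl⟩ := hx
  rintro rfl
  rw [linv_linv] at hy
  exact h (ha.trans hy.symm)

lemma wlen_inv_mul {u v : F n} (h : firstL u ≠ firstL v) :
    wlen (u⁻¹ * v) = wlen u + wlen v := by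
  rw [wlen, rword_inv_mul h, List.length_append]
  exact congrArg (· + _) (wlen_inv u)

lemma rword_mul {u v : F n} (h : firstL u⁻¹ ≠ firstL v) :
    rword (u * v) = rword u ++ rword v := by
  simpa using rword_inv_mul h

lemma wlen_mul {u v : F n} (h : firstL u⁻¹ ≠ firstL v) :
    wlen (u * v) = wlen u + wlen v := by
  simpa [wlen_inv] using wlen_inv_mul h

lemma firstL_mul {u v : F n} (h : firstL u⁻¹ ≠ firstL v) (hu : u ≠ 1) :
    firstL (u * v) = firstL u := by
  rw [firstL, rword_mul h, firstL]
  rw [List.head?_append_of_ne_nil]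
  rwa [ne_eq, rword, FreeGroup.toWord_eq_nil_iff]

lemma firstL_letterE (b : Letter n) : firstL (letterE b) = some b := by
  simp [firstL, letterE, rword_mk_of_isReduced]

lemma rword_letterE (b : Letter n) : rword (letterE b) = [b] := by
  simp [letterE, rword_mk_of_isReduced]

lemma wlen_letterE (b : Letter n) : wlen (letterE b) = 1 := by
  simp [wlen, rword_letterE]

lemma letterE_inv (b : Letter n) : (letterE b)⁻¹ = letterE (linv b) := by
  simp [letterE, FreeGroup.inv_mk, FreeGroup.invRev, linv]

lemma letterE_ne_one (b : Letter n) : letterE b ≠ 1 := by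
  intro h; have := wlen_letterE b; rw [h, wlen_one] at this; omega

lemma exists_of_firstL {u : F n} {b : Letter n} (h : firstL u = some b) :
    ∃ v, u = letterE b * v ∧ wlen u = wlen v + 1 ∧ firstL v ≠ some (linv b) := by
  rw [firstL, List.head?_eq_some_iff] at h
  obtain ⟨t, ht⟩ := h
  have hr := isReduced_rword u
  rw [ht] at hr
  have hrt : FreeGroup.IsReduced t := hr.infix (List.suffix_cons _ _).isInfix
  refine ⟨FreeGroup.mk t, ?_, ?_, ?_⟩
  · rw [letterE, FreeGroup.mul_mk, ← mk_rword u, ht]; rfl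
  · rw [wlen, ht, wlen, rword_mk_of_isReduced hrt]; rfl
  · rw [firstL, rword_mk_of_isReduced hrt]
    intro h2
    obtain ⟨t', rfl⟩ := List.head?_eq_some_iff.1 h2
    have := (FreeGroup.isReduced_cons_cons.1 hr).1
    rw [reduced_pair_iff] at this
    exact this rfl

lemma exists_firstL {u : F n} (h : u ≠ 1) : ∃ b, firstL u = some b := by
  rw [← Option.ne_none_iff_exists']
  rwa [ne_eq, firstL_eq_none]

/-- If `u` and `v` are seen in the same direction from `1`, then the geodesic from `u` to `v`
avoids `1`. -/
lemma wlen_inv_mul_lt {u v : F n} (h : firstL u = firstL v) (hu : u ≠ 1) :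
    wlen (u⁻¹ * v) + 2 ≤ wlen u + wlen v := by
  obtain ⟨b, hb⟩ := exists_firstL hu
  obtain ⟨u', rfl, h1, -⟩ := exists_of_firstL hb
  obtain ⟨v', rfl, h2, -⟩ := exists_of_firstL (h ▸ hb)
  have : (letterE b * u')⁻¹ * (letterE b * v') = u'⁻¹ * v' := by group
  rw [this, h1, h2]
  have := wlen_mul_le u'⁻¹ v'
  rw [wlen_inv] at this
  omega

lemma firstL_mul_short {u t : F n} (h : wlen t < wlen u) : firstL (u * t) = firstL u := by
  by_contra hne
  have := wlen_inv_mul (u := u) (v := u * t) (Ne.symm hne)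
  rw [inv_mul_cancel_left] at this
  omega

lemma firstL_letterE_mul {b : Letter n} {g : F n} (h : firstL g ≠ some (linv b)) :
    firstL (letterE b * g) = some b := by
  rw [firstL_mul _ (letterE_ne_one b), firstL_letterE]
  rw [letterE_inv, firstL_letterE]; exact h.symm

lemma wlen_letterE_mul {b : Letter n} {g : F n} (h : firstL g ≠ some (linv b)) :
    wlen (letterE b * g) = wlen g + 1 := by
  rw [wlen_mul, wlen_letterE, add_comm]
  rw [letterE_inv, firstL_letterE]; exact h.symm

/-- `w * letterE b` is a length-one extension of `w` iff `b` is not the direction from `w` back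
to `1`. -/
lemma wlen_mul_letterE_iff (w : F n) (b : Letter n) :
    wlen (w * letterE b) = wlen w + 1 ↔ firstL w⁻¹ ≠ some b := by
  constructor
  · intro h h2
    have hw : w⁻¹ ≠ 1 := by rintro h3; rw [h3, firstL_one] at h2; cases h2
    have := wlen_inv_mul_lt (u := w⁻¹) (v := letterE b) (by rw [h2, firstL_letterE]) hw
    rw [inv_inv, wlen_inv, wlen_letterE] at this
    omega
  · intro h
    rw [wlen_mul, wlen_letterE]
    rwa [firstL_letterE]

/-- From a vertex `q` of maximal length, all other vertices of no greater length lie in the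
direction of the base point `1`. -/
lemma firstL_eq_of_wlen_le {p q : F n} (hpq : p ≠ q) (h : wlen p ≤ wlen q) :
    firstL (q⁻¹ * p) = firstL q⁻¹ := by
  by_contra hne
  have := wlen_inv_mul (u := q⁻¹) (v := q⁻¹ * p) (Ne.symm hne)
  rw [show q⁻¹⁻¹ * (q⁻¹ * p) = p by group, wlen_inv] at this
  have h0 : wlen (q⁻¹ * p) = 0 := by omega
  rw [wlen_eq_zero, inv_mul_eq_one] at h0
  exact hpq h0.symm

/-! ### Axes and minimal subtrees -/

lemma wlen_pow {c : F n} (h : firstL c ≠ firstL c⁻¹) (k : ℕ) :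
    wlen (c ^ k) = k * wlen c ∧ (k ≠ 0 → firstL (c ^ k) = firstL c) := by
  have hc : c ≠ 1 := by rintro rfl; simp at h
  induction k with
  | zero => simp [wlen_one]
  | succ k ih =>
    have h1 : firstL c⁻¹ ≠ firstL (c ^ k) := by
      rcases eq_or_ne k 0 with rfl | hk
      · rw [pow_zero, firstL_one, ne_eq, firstL_eq_none]; simpa using hc
      · rw [ih.2 hk]; exact h.symm
    rw [pow_succ']
    refine ⟨?_, fun _ => firstL_mul h1 hc⟩
    rw [wlen_mul h1, ih.1]; ring

lemma cycLen_conj (h a : F n) : cycLen (h⁻¹ * a * h) = cycLen a := by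
  unfold cycLen
  congr 1
  ext m
  constructor
  · rintro ⟨x, rfl⟩
    exact ⟨h * x, by congr 1; group⟩
  · rintro ⟨x, rfl⟩
    exact ⟨h⁻¹ * x, by congr 1; group⟩

/-- An element has minimal length in its conjugacy class iff it is cyclically reduced. -/
lemma wlen_eq_cycLen_iff {c : F n} (hc : c ≠ 1) :
    wlen c = cycLen c ↔ firstL c ≠ firstL c⁻¹ := by
  constructor
  · intro h heq
    obtain ⟨b, hb⟩ := exists_firstL hc
    obtain ⟨v, hv, hl, -⟩ := exists_of_firstL hb
    have hle : cycLen c ≤ wlen ((letterE b)⁻¹ * c * letterE b) := Nat.sInf_le ⟨_, rfl⟩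
    -- conjugating by the common first letter of `c` and `c⁻¹` shortens `c`
    have h1 : wlen (c⁻¹⁻¹ * letterE b) + 2 ≤ wlen c⁻¹ + wlen (letterE b) :=
      wlen_inv_mul_lt (by rw [firstL_letterE, ← heq, hb]) (inv_ne_one.2 hc)
    rw [inv_inv, wlen_inv, wlen_letterE] at h1
    have hv1 : wlen v ≠ 0 := by
      rw [ne_eq, wlen_eq_zero]
      rintro rfl
      rw [heq, hv, mul_one, letterE_inv, firstL_letterE, Option.some_inj] at hb
      exact linv_ne b hb
    have h2 : firstL (c * letterE b) = firstL c := firstL_mul_short (by rw [wlen_letterE]; omega)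
    have h3 : wlen ((letterE b)⁻¹ * (c * letterE b)) + 2 ≤ wlen (letterE b) + wlen (c * letterE b) :=
      wlen_inv_mul_lt (by rw [firstL_letterE, h2, hb]) (letterE_ne_one b)
    rw [wlen_letterE, ← mul_assoc] at h3
    omega
  · intro h
    apply le_antisymm
    · refine le_csInf ⟨_, 1, rfl⟩ ?_
      rintro m ⟨x, rfl⟩
      -- compare the lengths of high powers
      by_contra hlt
      push Not at hlt
      set d := wlen (x⁻¹ * c * x) with hd
      have hpow : ∀ k : ℕ, wlen ((x⁻¹ * c * x) ^ k) ≤ k * d := by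
        intro k
        induction k with
        | zero => simp [wlen_one]
        | succ k ih =>
          rw [pow_succ]
          have := wlen_mul_le ((x⁻¹ * c * x) ^ k) (x⁻¹ * c * x)
          rw [Nat.succ_mul]; omega
      set k := 2 * wlen x + 1 with hk
      have h1 := (wlen_pow h k).1
      have h2 : c ^ k = x * (x⁻¹ * c * x) ^ k * x⁻¹ := by
        have := conj_pow (a := x⁻¹) (b := c) (i := k)
        rw [inv_inv] at this
        rw [this]; group
      have h3 := wlen_mul_le (x * (x⁻¹ * c * x) ^ k) x⁻¹
      have h4 := wlen_mul_le x ((x⁻¹ * c * x) ^ k)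
      rw [wlen_inv] at h3
      have h5 := hpow k
      rw [← h2, h1] at h3
      have h6 : k * (d + 1) ≤ k * wlen c := Nat.mul_le_mul_left _ hlt
      rw [Nat.mul_add] at h6
      omega
    · exact Nat.sInf_le ⟨1, by simp⟩

/-- A vertex `h` lies on the axis of `a` iff it sees `a h` and `a⁻¹ h` in different directions. -/
lemma mem_treeVerts_iff {B : Subgroup (F n)} {h : F n} :
    h ∈ treeVerts B ↔ ∃ a ∈ B, a ≠ 1 ∧ firstL (h⁻¹ * a * h) ≠ firstL (h⁻¹ * a⁻¹ * h) := by
  unfold treeVerts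
  simp only [Set.mem_ofPred_eq]
  refine exists_congr fun a => and_congr_right fun ha => and_congr_right fun ha1 => ?_
  have hne : h⁻¹ * a * h ≠ 1 := by
    intro h1
    apply ha1
    calc a = h * (h⁻¹ * a * h) * h⁻¹ := by group
      _ = 1 := by rw [h1]; group
  rw [← cycLen_conj h a, wlen_eq_cycLen_iff hne]
  rw [show (h⁻¹ * a * h)⁻¹ = h⁻¹ * a⁻¹ * h by group]

lemma mem_conjSub {B : Subgroup (F n)} {g x : F n} : x ∈ conjSub g B ↔ g⁻¹ * x * g ∈ B := by
  unfold conjSub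
  rw [Subgroup.mem_map]
  constructor
  · rintro ⟨y, hy, rfl⟩
    simpa [mul_assoc] using hy
  · intro h
    exact ⟨_, h, by simp [mul_assoc]⟩

lemma conjSub_conjSub (g h : F n) (B : Subgroup (F n)) :
    conjSub g (conjSub h B) = conjSub (g * h) B := by
  ext x
  rw [mem_conjSub, mem_conjSub, mem_conjSub]
  congr! 1
  group

lemma mem_treeVerts_conjSub {B : Subgroup (F n)} {g h : F n} :
    h ∈ treeVerts (conjSub g B) ↔ g⁻¹ * h ∈ treeVerts B := by
  simp only [mem_treeVerts_iff]
  constructor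
  · rintro ⟨a, ha, ha1, h1⟩
    refine ⟨g⁻¹ * a * g, mem_conjSub.1 ha, ?_, ?_⟩
    · intro h2
      apply ha1
      calc a = g * (g⁻¹ * a * g) * g⁻¹ := by group
        _ = 1 := by rw [h2]; group
    · convert h1 using 2 <;> group
  · rintro ⟨a, ha, ha1, h1⟩
    refine ⟨g * a * g⁻¹, mem_conjSub.2 (by convert ha using 1; group), ?_, ?_⟩
    · intro h2
      apply ha1
      calc a = g⁻¹ * (g * a * g⁻¹) * g := by group
        _ = 1 := by rw [h2]; group
    · convert h1 using 2 <;> group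

end Words

/-! ### Prefixes of boundary points -/

section Prefixes

variable {n : ℕ}

/-- The vertex at distance `m` from `1` on the geodesic ray from `1` to `ξ`. -/
def pre (ξ : Boundary n) (m : ℕ) : F n := FreeGroup.mk (bpre ξ m)

lemma bpre_length (ξ : Boundary n) (m : ℕ) : (bpre ξ m).length = m := by simp [bpre]

lemma bpre_succ (ξ : Boundary n) (m : ℕ) : bpre ξ (m + 1) = bpre ξ m ++ [ξ.1 m] := by
  simp [bpre, List.range_succ]

lemma isReduced_bpre (ξ : Boundary n) (m : ℕ) : FreeGroup.IsReduced (bpre ξ m) := by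
  rw [FreeGroup.IsReduced, List.isChain_iff_getElem]
  intro i hi
  rw [reduced_pair_iff]
  simp only [bpre, List.getElem_map, List.getElem_range]
  exact ξ.2 i

lemma rword_pre (ξ : Boundary n) (m : ℕ) : rword (pre ξ m) = bpre ξ m :=
  rword_mk_of_isReduced (isReduced_bpre ξ m)

lemma wlen_pre (ξ : Boundary n) (m : ℕ) : wlen (pre ξ m) = m := by
  rw [wlen, rword_pre, bpre_length]

lemma pre_zero (ξ : Boundary n) : pre ξ 0 = 1 := by
  rw [← wlen_eq_zero, wlen_pre]

lemma pre_succ (ξ : Boundary n) (m : ℕ) : pre ξ (m + 1) = pre ξ m * letterE (ξ.1 m) := by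
  rw [pre, bpre_succ, pre, letterE, FreeGroup.mul_mk]

lemma firstL_pre_inv (ξ : Boundary n) (m : ℕ) : firstL (pre ξ m)⁻¹ ≠ some (ξ.1 m) := by
  rw [← wlen_mul_letterE_iff, ← pre_succ, wlen_pre, wlen_pre]

lemma bpre_take (ξ : Boundary n) {m k : ℕ} (h : m ≤ k) : (bpre ξ k).take m = bpre ξ m := by
  rw [bpre, bpre, ← List.map_take, List.take_range, min_eq_left h]

lemma pre_eq_of_le {ξ ζ : Boundary n} {m k : ℕ} (h : m ≤ k) (he : pre ξ k = pre ζ k) :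
    pre ξ m = pre ζ m := by
  have h1 : bpre ξ k = bpre ζ k := by rw [← rword_pre, he, rword_pre]
  rw [pre, pre, ← bpre_take ξ h, ← bpre_take ζ h, h1]

lemma seq_eq_of_pre_eq {ξ ζ : Boundary n} {m : ℕ} (he : pre ξ (m + 1) = pre ζ (m + 1)) :
    ξ.1 m = ζ.1 m := by
  have h1 : bpre ξ (m + 1) = bpre ζ (m + 1) := by rw [← rword_pre, he, rword_pre]
  rw [bpre_succ, bpre_succ] at h1
  simpa using (List.append_inj_right' h1 rfl)

lemma exists_pre_ne {ξ ζ : Boundary n} (h : ξ ≠ ζ) : ∃ m, pre ξ m ≠ pre ζ m := by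
  by_contra! hc
  exact h (Subtype.ext (funext fun m => seq_eq_of_pre_eq (hc (m + 1))))

lemma wordPrefixOf_iff (w : F n) (ξ : Boundary n) : wordPrefixOf w ξ ↔ pre ξ (wlen w) = w := by
  rw [wordPrefixOf, ← rword_pre]
  exact FreeGroup.toWord_inj

/-- From a vertex `v`, the points of the ray to `ξ` beyond distance `|v|` from `1` are all seen in
the same direction. -/
lemma firstL_pre_succ {v : F n} {ξ : Boundary n} {m : ℕ} (hv : wlen v ≤ m) (hne : v ≠ pre ξ m) :
    firstL (v⁻¹ * pre ξ (m + 1)) = firstL (v⁻¹ * pre ξ m) := by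
  rw [pre_succ, ← mul_assoc, firstL_mul]
  · rw [firstL_letterE, show (v⁻¹ * pre ξ m)⁻¹ = (pre ξ m)⁻¹ * v by group,
      firstL_eq_of_wlen_le hne (by rwa [wlen_pre])]
    exact firstL_pre_inv ξ m
  · rwa [ne_eq, inv_mul_eq_one]

lemma firstL_pre_stable {v : F n} {ξ : Boundary n} {m k : ℕ} (hv : wlen v < m) (hk : m ≤ k) :
    firstL (v⁻¹ * pre ξ k) = firstL (v⁻¹ * pre ξ m) := by
  induction k, hk using Nat.le_induction with
  | base => rfl
  | succ k hk ih =>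
    rw [firstL_pre_succ (by omega), ih]
    rintro rfl
    rw [wlen_pre] at hv; omega

lemma firstL_of_prefix {v a : F n} {ξ : Boundary n} {m : ℕ} (hv : wlen v < m)
    (ha : bpre ξ m <+: rword a) :
    firstL (v⁻¹ * a) = firstL (v⁻¹ * pre ξ m) ∧ m ≤ wlen (v⁻¹ * a) + wlen v := by
  obtain ⟨t, ht⟩ := ha
  have hred := isReduced_rword a
  rw [← ht] at hred
  have hrt : FreeGroup.IsReduced t := hred.infix (List.suffix_append _ _).isInfix
  have hat : a = pre ξ m * FreeGroup.mk t := by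
    rw [pre, FreeGroup.mul_mk, ht, mk_rword]
  have hla : wlen a = m + wlen (FreeGroup.mk t) := by
    rw [wlen, ← ht, List.length_append, bpre_length, wlen, rword_mk_of_isReduced hrt]
  have hne : v ≠ pre ξ m := by rintro rfl; rw [wlen_pre] at hv; omega
  constructor
  · rw [hat, ← mul_assoc, firstL_mul]
    · rw [show (v⁻¹ * pre ξ m)⁻¹ = (pre ξ m)⁻¹ * v by group,
        firstL_eq_of_wlen_le hne (by rw [wlen_pre]; omega)]
      intro heq
      have hm : (pre ξ m)⁻¹ ≠ 1 := by
        rw [ne_eq, ← wlen_eq_zero, wlen_inv, wlen_pre]; omega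
      have := wlen_inv_mul_lt heq hm
      rw [inv_inv, ← hat, wlen_inv, wlen_pre] at this
      omega
    · rwa [ne_eq, inv_mul_eq_one]
  · have := wlen_mul_le v (v⁻¹ * a)
    rw [mul_inv_cancel_left] at this
    omega

/-! ### Limit sets and minimal subtrees -/

/-- Either `1` lies on the axis of `u z u⁻¹`, which is the translate by `u` of the axis of `z`, or
this axis is seen from `1` in the direction of `u`. -/
lemma conj_dichotomy {z : F n} (hz : firstL z ≠ firstL z⁻¹) (u : F n) :
    firstL (u * z * u⁻¹) ≠ firstL (u * z * u⁻¹)⁻¹ ∨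
      (firstL (u * z * u⁻¹) = firstL u ∧ firstL (u * z * u⁻¹)⁻¹ = firstL u) := by
  have hz1 : z ≠ 1 := by rintro rfl; simp at hz
  have hconj1 : ∀ u : F n, u * z * u⁻¹ ≠ 1 := fun u h => hz1 (by
    calc z = u⁻¹ * (u * z * u⁻¹) * u := by group
      _ = 1 := by rw [h]; group)
  induction hk : wlen u generalizing u with
  | zero => left; rw [wlen_eq_zero] at hk; subst hk; simpa using hz
  | succ k ih =>
    have hu1 : u ≠ 1 := by rintro rfl; rw [wlen_one] at hk; omega
    obtain ⟨e, he⟩ := exists_firstL hu1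
    obtain ⟨v, hv, hl, hve⟩ := exists_of_firstL he
    have hX : u * z * u⁻¹ = letterE e * (v * z * v⁻¹) * (letterE e)⁻¹ := by rw [hv]; group
    have hXi : (u * z * u⁻¹)⁻¹ = letterE e * ((v * z * v⁻¹)⁻¹ * (letterE e)⁻¹) := by
      rw [hv]; group
    have hXn := hconj1 u
    have ihv := ih v (by omega)
    have hvn := hconj1 v
    set X := u * z * u⁻¹ with hXdef
    set Y := v * z * v⁻¹ with hYdef
    rw [he]
    by_cases h1 : firstL Y = some (linv e)
    · rcases ihv with ihv | ihv
      · left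
        rw [← wlen_eq_cycLen_iff hXn]
        have hcyc : cycLen X = cycLen Y := by
          rw [hX, ← cycLen_conj (letterE e)⁻¹ Y, inv_inv]
        rw [← wlen_eq_cycLen_iff hvn] at ihv
        refine le_antisymm ?_ (Nat.sInf_le ⟨1, by simp⟩)
        rw [hcyc, ← ihv, hX]
        have h2 := wlen_inv_mul_lt (u := letterE (linv e)) (v := Y)
          (by rw [firstL_letterE, h1]) (letterE_ne_one _)
        rw [letterE_inv, linv_linv, wlen_letterE] at h2
        have h3 := wlen_mul_le (letterE e * Y) (letterE e)⁻¹
        rw [wlen_inv, wlen_letterE] at h3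
        omega
      · exact absurd (ihv.1.symm.trans h1) hve
    by_cases h2 : firstL Y⁻¹ = some (linv e)
    · rcases ihv with ihv | ihv
      · left
        rw [← wlen_eq_cycLen_iff hXn]
        have hcyc : cycLen X = cycLen Y := by
          rw [hX, ← cycLen_conj (letterE e)⁻¹ Y, inv_inv]
        rw [← wlen_eq_cycLen_iff hvn] at ihv
        refine le_antisymm ?_ (Nat.sInf_le ⟨1, by simp⟩)
        rw [hcyc, ← ihv, hX, mul_assoc]
        have h3 := wlen_inv_mul_lt (u := Y⁻¹) (v := letterE (linv e))
          (by rw [firstL_letterE, h2]) (inv_ne_one.2 hvn)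
        rw [inv_inv, ← letterE_inv, wlen_inv, wlen_inv, wlen_letterE] at h3
        have h4 := wlen_mul_le (letterE e) (Y * (letterE e)⁻¹)
        rw [wlen_letterE] at h4
        omega
      · exact absurd (ihv.2.symm.trans h2) hve
    right
    constructor
    · rw [hX, mul_assoc, firstL_letterE_mul]
      rw [firstL_mul _ hvn]
      · exact h1
      · rw [letterE_inv, firstL_letterE]; exact h2
    · rw [hXi, firstL_letterE_mul]
      rw [firstL_mul _ (inv_ne_one.2 hvn)]
      · exact h2
      · rw [inv_inv, letterE_inv, firstL_letterE]; exact h1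

lemma exists_cyclicallyReduced {c : F n} (hc : c ≠ 1) :
    ∃ t z : F n, c = t * z * t⁻¹ ∧ firstL z ≠ firstL z⁻¹ := by
  obtain ⟨t, ht⟩ : ∃ t, wlen (t⁻¹ * c * t) = cycLen c :=
    Nat.sInf_mem (s := {m | ∃ h : F n, wlen (h⁻¹ * c * h) = m}) ⟨_, 1, rfl⟩
  refine ⟨t, t⁻¹ * c * t, by group, ?_⟩
  rw [← wlen_eq_cycLen_iff, cycLen_conj, ht]
  intro h
  apply hc
  calc c = t * (t⁻¹ * c * t) * t⁻¹ := by group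
    _ = 1 := by rw [h]; group

/-- If `v ∉ T_B` and `ξ ∈ ∂B`, then some element of `B` moves `v`, forwards and backwards, in the
direction of `ξ`: a conjugate `a c a⁻¹` with `a ∈ B` deep in the direction of `ξ`. -/
lemma exists_towards {B : Subgroup (F n)} (hB : B ≠ ⊥) {v : F n} (hv : v ∉ treeVerts B)
    {ξ : Boundary n} (hξ : ξ ∈ limitSet B) {m : ℕ} (hm : wlen v < m) :
    ∃ x ∈ B, firstL (v⁻¹ * x * v) = firstL (v⁻¹ * pre ξ m) ∧
      firstL (v⁻¹ * x * v)⁻¹ = firstL (v⁻¹ * pre ξ m) := by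
  obtain ⟨c, hcB, hc⟩ := (Subgroup.ne_bot_iff_exists_ne_one.1 hB : ∃ a : B, a ≠ 1) |>.elim
    fun a ha => (⟨a.1, a.2, fun h => ha (Subtype.ext h)⟩ : ∃ c ∈ B, c ≠ 1)
  obtain ⟨t, z, hctz, hz⟩ := exists_cyclicallyReduced hc
  obtain ⟨a, haB, ha⟩ := hξ (max m (wlen v + wlen t + 1))
  set M := max m (wlen v + wlen t + 1) with hM
  obtain ⟨h1, h2⟩ := firstL_of_prefix (v := v) (by omega) ha
  have h3 : firstL (v⁻¹ * a * t) = firstL (v⁻¹ * pre ξ m) := by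
    rw [firstL_mul_short (by omega), h1]
    exact firstL_pre_stable hm (by omega)
  have hx : v⁻¹ * (a * c * a⁻¹) * v = (v⁻¹ * a * t) * z * (v⁻¹ * a * t)⁻¹ := by
    rw [hctz]; group
  have hxB : a * c * a⁻¹ ∈ B := B.mul_mem (B.mul_mem haB hcB) (B.inv_mem haB)
  refine ⟨a * c * a⁻¹, hxB, ?_⟩
  rw [hx]
  rcases conj_dichotomy hz (v⁻¹ * a * t) with h | h
  · exfalso
    apply hv
    rw [mem_treeVerts_iff]
    refine ⟨a * c * a⁻¹, hxB, ?_, ?_⟩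
    · intro h1
      apply hc
      calc c = a⁻¹ * (a * c * a⁻¹) * a := by group
        _ = 1 := by rw [h1]; group
    · rw [← hx] at h
      convert h using 2
      group
  · rwa [h3] at h

/-- The geodesic between two points of the limit set of `B` lies in the minimal subtree of `B`.
If `v` is a vertex on it and `v ∉ T_B`, a ping-pong argument produces an element of `B` whose axis
passes through `v`. -/
lemma mem_treeVerts_of_limitSet {B : Subgroup (F n)} (hB : B ≠ ⊥) {v : F n}
    {ξ ζ : Boundary n} (hξ : ξ ∈ limitSet B) (hζ : ζ ∈ limitSet B) {m : ℕ} (hm : wlen v < m)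
    (hne : firstL (v⁻¹ * pre ξ m) ≠ firstL (v⁻¹ * pre ζ m)) : v ∈ treeVerts B := by
  by_contra hv
  obtain ⟨x, hxB, hx1, hx2⟩ := exists_towards hB hv hξ hm
  obtain ⟨y, hyB, hy1, hy2⟩ := exists_towards hB hv hζ hm
  have hxne : v⁻¹ * x * v ≠ 1 := by
    intro h
    rw [h, firstL_one, eq_comm, firstL_eq_none, inv_mul_eq_one] at hx1
    rw [hx1, wlen_pre] at hm; omega
  have hyne : v⁻¹ * y * v ≠ 1 := by
    intro h
    rw [h, firstL_one, eq_comm, firstL_eq_none, inv_mul_eq_one] at hy1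
    rw [hy1, wlen_pre] at hm; omega
  have h1 : firstL (v⁻¹ * x * v * (v⁻¹ * y * v)) = firstL (v⁻¹ * pre ξ m) := by
    rw [firstL_mul (by rwa [hx2, hy1]) hxne, hx1]
  have h2 : firstL ((v⁻¹ * y * v)⁻¹ * (v⁻¹ * x * v)⁻¹) = firstL (v⁻¹ * pre ζ m) := by
    rw [firstL_mul (by rw [inv_inv, hx2, hy1]; exact hne.symm) (inv_ne_one.2 hyne), hy2]
  apply hv
  rw [mem_treeVerts_iff]
  have e1 : v⁻¹ * (x * y) * v = v⁻¹ * x * v * (v⁻¹ * y * v) := by group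
  have e2 : v⁻¹ * (x * y)⁻¹ * v = (v⁻¹ * y * v)⁻¹ * (v⁻¹ * x * v)⁻¹ := by group
  refine ⟨x * y, B.mul_mem hxB hyB, ?_, ?_⟩
  · intro h
    rw [← e1, h] at h1
    rw [← e2, h] at h2
    apply hne
    rw [← h1, ← h2]
    simp
  · rw [e1, e2, h1, h2]; exact hne

/-- The minimal subtree of a finitely generated subgroup stays within bounded distance of the
subgroup. -/
lemma exists_treeVerts_bound {B : Subgroup (F n)} (hB : B.FG) :
    ∃ D : ℕ, ∀ h ∈ treeVerts B, ∃ b ∈ B, wlen (b⁻¹ * h) ≤ D := by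
  obtain ⟨S, hS⟩ := hB
  refine ⟨S.sup wlen, ?_⟩
  set D := S.sup wlen with hD
  have hSD : ∀ s ∈ S, wlen s ≤ D := fun s hs => Finset.le_sup (f := wlen) hs
  -- a step by a generator changes the direction seen from `v` only near `v`
  have hstep : ∀ v x s : F n, wlen s ≤ D → x ∈ B → firstL (v⁻¹ * x) ≠ firstL (v⁻¹ * (x * s)) →
      ∃ b ∈ B, wlen (b⁻¹ * v) ≤ D := by
    intro v x s hs hx hne
    refine ⟨x, hx, ?_⟩
    have := wlen_inv_mul hne
    rw [show (v⁻¹ * x)⁻¹ * (v⁻¹ * (x * s)) = s by group, wlen_inv_mul_comm] at this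
    omega
  have key : ∀ b ∈ B, ∀ v : F n, firstL (v⁻¹ * 1) ≠ firstL (v⁻¹ * b) →
      ∃ b ∈ B, wlen (b⁻¹ * v) ≤ D := by
    intro b hb
    rw [← hS] at hb
    induction hb using Subgroup.closure_induction_right with
    | one => intro v hv; exact absurd rfl hv
    | mul_right x hx y hy ih =>
      rw [hS] at hx
      intro v hv
      by_cases h : firstL (v⁻¹ * 1) = firstL (v⁻¹ * x)
      · exact hstep v x y (hSD y hy) hx (by rwa [h] at hv)
      · exact ih v h
    | mul_inv_cancel x hx y hy ih =>
      rw [hS] at hx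
      intro v hv
      by_cases h : firstL (v⁻¹ * 1) = firstL (v⁻¹ * x)
      · exact hstep v x y⁻¹ (by rw [wlen_inv]; exact hSD y hy) hx (by rwa [h] at hv)
      · exact ih v h
  intro h hh
  rw [mem_treeVerts_iff] at hh
  obtain ⟨a, haB, ha1, hne⟩ := hh
  set c := h⁻¹ * a * h with hc
  have hci : h⁻¹ * a⁻¹ * h = c⁻¹ := by rw [hc]; group
  rw [hci] at hne
  have hcne : c ≠ 1 := by rintro h1; rw [h1] at hne; simp at hne
  have hcpos : 1 ≤ wlen c := Nat.one_le_iff_ne_zero.2 (by rwa [ne_eq, wlen_eq_zero])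
  -- for large `N`, the vertex `h` separates `a ^ N` from `a⁻¹ ^ N`
  set N := wlen h + 1 with hN
  have hdir : ∀ e : F n, firstL e ≠ firstL e⁻¹ → wlen e = wlen c →
      firstL (e ^ N * h⁻¹) = firstL e := by
    intro e he hl
    rw [firstL_mul_short, (wlen_pow he N).2 (by omega)]
    rw [(wlen_pow he N).1, wlen_inv, hl]
    nlinarith
  have h1 := hdir c hne rfl
  have h2 := hdir c⁻¹ (by rw [inv_inv]; exact hne.symm) (wlen_inv c)
  have e1 : c ^ N * h⁻¹ = h⁻¹ * a ^ N := by
    have := conj_pow (a := h⁻¹) (b := a) (i := N)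
    rw [inv_inv] at this
    rw [hc, this]; group
  have e2 : c⁻¹ ^ N * h⁻¹ = h⁻¹ * (a ^ N)⁻¹ := by
    have := conj_pow (a := h⁻¹) (b := a⁻¹) (i := N)
    rw [inv_inv] at this
    rw [← hci, this]; group
  obtain ⟨b, hb, hbD⟩ := key (a ^ N * a ^ N) (B.mul_mem (B.pow_mem haB N) (B.pow_mem haB N))
    (a ^ N * h) (by
      rw [show (a ^ N * h)⁻¹ * 1 = h⁻¹ * (a ^ N)⁻¹ by group,
        show (a ^ N * h)⁻¹ * (a ^ N * a ^ N) = h⁻¹ * a ^ N by group, ← e1, ← e2, h1, h2]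
      exact hne.symm)
  refine ⟨(a ^ N)⁻¹ * b, B.mul_mem (B.inv_mem (B.pow_mem haB N)) hb, ?_⟩
  rw [show ((a ^ N)⁻¹ * b)⁻¹ * h = b⁻¹ * (a ^ N * h) by group]
  exact hbD

/-- A ray that eventually stays in the minimal subtree of a finitely generated subgroup ends in
its limit set. -/
lemma mem_limitSet_of_treeVerts {B : Subgroup (F n)} (hB : B.FG) {ξ : Boundary n} {m₀ : ℕ}
    (h : ∀ m ≥ m₀, pre ξ m ∈ treeVerts B) : ξ ∈ limitSet B := by
  obtain ⟨D, hD⟩ := exists_treeVerts_bound hB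
  intro m
  obtain ⟨b, hb, hbD⟩ := hD _ (h (m₀ + m + D + 1) (by omega))
  refine ⟨b, hb, ?_⟩
  set M := m₀ + m + D + 1 with hM
  -- an element of `B` within `D` of the vertex at distance `M > m + D` shares the first `m` letters
  have hk : ∀ k ≤ m, (rword b).take k = bpre ξ k := by
    intro k hk
    induction k with
    | zero => simp [bpre]
    | succ k ih =>
      have ih := ih (by omega)
      have hdir : firstL ((pre ξ k)⁻¹ * b) = some (ξ.1 k) := by
        have e : (pre ξ k)⁻¹ * b = (pre ξ k)⁻¹ * pre ξ M * ((pre ξ M)⁻¹ * b) := by group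
        have hl := wlen_mul_le (pre ξ k) ((pre ξ k)⁻¹ * pre ξ M)
        rw [mul_inv_cancel_left, wlen_pre, wlen_pre] at hl
        rw [e, firstL_mul_short (by rw [wlen_inv_mul_comm]; omega),
          firstL_pre_stable (m := k + 1) (by rw [wlen_pre]; omega) (by omega), pre_succ,
          inv_mul_cancel_left, firstL_letterE]
      have hb2 : b = pre ξ k * FreeGroup.mk ((rword b).drop k) := by
        rw [pre, ← ih, FreeGroup.mul_mk, List.take_append_drop, mk_rword]
      have hdrop : FreeGroup.IsReduced ((rword b).drop k) :=
        (isReduced_rword b).infix (List.drop_suffix _ _).isInfix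
      have h2 : (pre ξ k)⁻¹ * b = FreeGroup.mk ((rword b).drop k) := by
        rw [inv_mul_eq_iff_eq_mul]; exact hb2
      rw [h2, firstL, rword_mk_of_isReduced hdrop, List.head?_drop] at hdir
      rw [List.take_add_one, hdir, ih, bpre_succ]
      rfl
  rw [← hk m le_rfl]
  exact List.take_prefix _ _

end Prefixes

/-! ### Words meeting `𝒞` -/

section Good

variable {n r L : ℕ} {A : Fin r → Subgroup (F n)}

lemma FmA_mul_right {u v : F n} (h : firstL u⁻¹ ≠ firstL v) (hu : u ∈ FmA A L) :
    u * v ∈ FmA A L := by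
  obtain ⟨x, hx, hi⟩ := hu
  exact ⟨x, hx, hi.trans (by rw [rword_mul h]; exact (List.prefix_append _ _).isInfix)⟩

lemma FmA_mul_left {u v : F n} (h : firstL u⁻¹ ≠ firstL v) (hv : v ∈ FmA A L) :
    u * v ∈ FmA A L := by
  obtain ⟨x, hx, hi⟩ := hv
  exact ⟨x, hx, hi.trans (by rw [rword_mul h]; exact (List.suffix_append _ _).isInfix)⟩

lemma rword_inv (g : F n) : rword g⁻¹ = FreeGroup.invRev (rword g) := FreeGroup.toWord_inv g

lemma rword_mk_take (w : F n) (m : ℕ) :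
    rword (FreeGroup.mk ((rword w).take m)) = (rword w).take m :=
  rword_mk_of_isReduced ((isReduced_rword w).infix (List.take_prefix _ _).isInfix)

/-- The prefixes of `w⁻¹` are the translates by `w⁻¹` of the prefixes of `w`. -/
lemma mk_take_inv (w : F n) {m : ℕ} :
    w * FreeGroup.mk ((rword w⁻¹).take m) = FreeGroup.mk ((rword w).take (wlen w - m)) := by
  have h1 : (rword w⁻¹).take m = FreeGroup.invRev ((rword w).drop (wlen w - m)) := by
    rw [rword_inv, FreeGroup.invRev, FreeGroup.invRev, List.take_reverse, List.length_map,
      List.map_drop]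
    rfl
  rw [h1, ← FreeGroup.inv_mk, mul_inv_eq_iff_eq_mul, FreeGroup.mul_mk, List.take_append_drop,
    mk_rword]

lemma Ccal_inv {x : F n} (hx : x ∈ Ccal A L) : x⁻¹ ∈ Ccal A L := by
  refine ⟨by rw [wlen_inv]; exact hx.1, ?_⟩
  intro i B hB hp
  -- a path `γ_{x⁻¹}` in `T_B` translates to a path `γ_x` in `T_{x B x⁻¹}`
  have hpath : pathIn x (treeVerts (conjSub x B)) := by
    intro m hm
    rw [mem_treeVerts_conjSub]
    have h1 := hp (wlen x - m) (by rw [wlen_inv]; omega)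
    have h2 := mk_take_inv x (m := wlen x - m)
    rw [show wlen x - (wlen x - m) = m by omega] at h2
    rw [← h2, inv_mul_cancel_left]
    exact h1
  refine hx.2 i (conjSub x B) ⟨?_, ?_⟩ hpath
  · obtain ⟨g, rfl⟩ := hB.1
    exact ⟨x * g, conjSub_conjSub _ _ _⟩
  · have := hpath 0 (Nat.zero_le _)
    rwa [List.take_zero, ← FreeGroup.one_eq_mk] at this

lemma FmA_inv {w : F n} (hw : w ∈ FmA A L) : w⁻¹ ∈ FmA A L := by
  obtain ⟨x, hx, s, t, hst⟩ := hw
  refine ⟨x⁻¹, Ccal_inv hx, FreeGroup.invRev t, FreeGroup.invRev s, ?_⟩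
  rw [rword_inv, rword_inv, ← hst]
  simp [FreeGroup.invRev]

lemma FmA_ne_one {w : F n} (hw : w ∈ FmA A L) : w ≠ 1 := by
  rintro rfl
  obtain ⟨x, hx, hi⟩ := hw
  have h1 := hi.length_le
  have h2 := hx.1
  rw [wlen] at h2
  rw [rword_one, List.length_nil] at h1
  omega

lemma InSystem.conjSub {B : Subgroup (F n)} (h : InSystem A B) (g : F n) :
    InSystem A (conjSub g B) := by
  obtain ⟨i, x, rfl⟩ := h
  exact ⟨i, g * x, conjSub_conjSub _ _ _⟩

/-- A segment of length at least `L + 2` with no subword in `𝒞` is contained in a single tree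
`T_B`: each window of length `L + 2` lies in such a tree, and consecutive windows overlap in
length `L + 1`, which exceeds the diameter of the intersection of two different trees. -/
lemma exists_tree_of_notMem_FmA (hdiam : DiamBound A L) (p w : F n) (hl : L + 2 ≤ wlen w)
    (hw : w ∉ FmA A L) :
    ∃ B, InSystem A B ∧ ∀ m ≤ wlen w, p * FreeGroup.mk ((rword w).take m) ∈ treeVerts B := by
  have hwin : ∀ j, j + (L + 2) ≤ wlen w → ∃ B, InSystem A B ∧
      ∀ m, j ≤ m → m ≤ j + (L + 2) → p * FreeGroup.mk ((rword w).take m) ∈ treeVerts B := by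
    intro j hj
    set l := ((rword w).drop j).take (L + 2) with hldef
    have hinf : l <:+: rword w :=
      (List.take_prefix _ _).isInfix.trans (List.drop_suffix _ _).isInfix
    have hx : rword (FreeGroup.mk l) = l := rword_mk_of_isReduced ((isReduced_rword w).infix hinf)
    have hxl : wlen (FreeGroup.mk l) = L + 2 := by
      rw [wlen, hx, hldef, List.length_take, List.length_drop]
      rw [wlen] at hj; omega
    have hnot : FreeGroup.mk l ∉ Ccal A L := fun h => hw ⟨_, h, by rwa [hx]⟩
    have hex : ∃ i B, GammaMem A i B ∧ pathIn (FreeGroup.mk l) (treeVerts B) := by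
      by_contra! hc
      exact hnot ⟨hxl, hc⟩
    obtain ⟨i, B, ⟨⟨g, hg⟩, -⟩, hp⟩ := hex
    refine ⟨conjSub (p * FreeGroup.mk ((rword w).take j)) B, InSystem.conjSub ⟨i, g, hg⟩ _, ?_⟩
    intro m h1 h2
    rw [mem_treeVerts_conjSub]
    have h3 := hp (m - j) (by omega)
    convert h3 using 1
    rw [hx, hldef, List.take_take, min_eq_left (by omega), mul_inv_rev, mul_assoc,
      inv_mul_cancel_left, inv_mul_eq_iff_eq_mul, FreeGroup.mul_mk]
    congr 1
    conv_lhs => rw [show m = j + (m - j) by omega, List.take_add]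
  obtain ⟨B, hB, hB0⟩ := hwin 0 (by omega)
  have hall : ∀ j, j + (L + 2) ≤ wlen w →
      ∀ m ≤ j + (L + 2), p * FreeGroup.mk ((rword w).take m) ∈ treeVerts B := by
    intro j
    induction j with
    | zero => intro hj m hm; exact hB0 m (Nat.zero_le _) hm
    | succ j ih =>
      intro hj m hm
      obtain ⟨B', hB', h'⟩ := hwin (j + 1) hj
      have ih := ih (by omega)
      have heq : B = B' := by
        by_contra hne
        have h1 := hdiam B B' hB hB' hne _ ⟨ih (j + 1) (by omega), h' (j + 1) le_rfl (by omega)⟩ _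
          ⟨ih (j + (L + 2)) (by omega), h' (j + (L + 2)) (by omega) (by omega)⟩
        have h2 : FreeGroup.mk ((rword w).take (j + (L + 2))) =
            FreeGroup.mk ((rword w).take (j + 1)) *
              FreeGroup.mk (((rword w).drop (j + 1)).take (L + 1)) := by
          rw [FreeGroup.mul_mk, ← List.take_add]
          congr 2; omega
        rw [dist', h2, show ∀ a b c : F n, (a * b)⁻¹ * (a * (b * c)) = c by intros; group, wlen,
          rword_mk_of_isReduced, List.length_take, List.length_drop] at h1
        · rw [wlen] at hj; omega
        · exact (isReduced_rword w).infix
            ((List.take_prefix _ _).isInfix.trans (List.drop_suffix _ _).isInfix)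
      subst heq
      rcases Nat.lt_or_ge m (j + 1) with h | h
      · exact ih m (by omega)
      · exact h' m h hm
  refine ⟨B, hB, fun m hm => hall (wlen w - (L + 2)) (by omega) m (by omega)⟩

lemma wlen_pre_inv_mul_pre {ξ ζ : Boundary n} {k m : ℕ} (hk : pre ξ k = pre ζ k)
    (hne : ξ.1 k ≠ ζ.1 k) (hm : k + 1 ≤ m) :
    rword ((pre ξ m)⁻¹ * pre ζ m) =
      rword ((pre ξ k)⁻¹ * pre ξ m)⁻¹ ++ rword ((pre ζ k)⁻¹ * pre ζ m) := by
  have h1 : ∀ x : Boundary n, firstL ((pre x k)⁻¹ * pre x m) = some (x.1 k) := by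
    intro x
    rw [firstL_pre_stable (m := k + 1) (by rw [wlen_pre]; omega) hm, pre_succ,
      inv_mul_cancel_left, firstL_letterE]
  rw [← rword_inv_mul (by rw [h1, h1]; simpa using hne), ← hk]
  congr 1
  group

lemma wlen_pre_pre (ξ : Boundary n) {k m : ℕ} (h : k ≤ m) :
    wlen ((pre ξ k)⁻¹ * pre ξ m) = m - k := by
  have e : (pre ξ k)⁻¹ * pre ξ m = FreeGroup.mk ((bpre ξ m).drop k) := by
    rw [inv_mul_eq_iff_eq_mul, pre, pre, FreeGroup.mul_mk, ← bpre_take ξ h,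
      List.take_append_drop]
  rw [e, wlen, rword_mk_of_isReduced ((isReduced_bpre ξ m).infix (List.drop_suffix _ _).isInfix),
    List.length_drop, bpre_length]

lemma InSystem.fg (hsys : IsSystem A) {B : Subgroup (F n)} (h : InSystem A B) : B.FG := by
  obtain ⟨i, g, rfl⟩ := h
  obtain ⟨S, hS⟩ := hsys.1 i
  refine ⟨S.image (MulAut.conj g).toMonoidHom, ?_⟩
  rw [Finset.coe_image, ← MonoidHom.map_closure, hS]
  rfl

lemma InSystem.ne_bot (hsys : IsSystem A) {B : Subgroup (F n)} (h : InSystem A B) : B ≠ ⊥ := by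
  obtain ⟨i, g, rfl⟩ := h
  intro hb
  apply hsys.2.1 i
  rw [Subgroup.eq_bot_iff_forall] at hb ⊢
  intro x hx
  have := hb (g * x * g⁻¹) (mem_conjSub.2 (by convert hx using 1; group))
  calc x = g⁻¹ * (g * x * g⁻¹) * g := by group
    _ = 1 := by rw [this]; group

/-- A geodesic with endpoints outside `∂²𝒜` contains a segment with label in `F_n − 𝒜`. -/
lemma exists_good (hsys : IsSystem A) (hdiam : DiamBound A L) {ξ ζ : Boundary n}
    (h : s(ξ, ζ) ∈ relSet A) : ∃ m₀, ∀ m ≥ m₀, (pre ξ m)⁻¹ * pre ζ m ∈ FmA A L := by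
  have hne : ξ ≠ ζ := by
    have := h.1; simpa using this
  -- `k` is the length of the common prefix
  have hex := exists_pre_ne hne
  obtain ⟨k, hk, hk1⟩ : ∃ k, pre ξ k = pre ζ k ∧ pre ξ (k + 1) ≠ pre ζ (k + 1) := by
    have h0 : Nat.find hex ≠ 0 := by
      intro h0
      have := Nat.find_spec hex
      rw [h0, pre_zero, pre_zero] at this
      exact this rfl
    refine ⟨Nat.find hex - 1, ?_, ?_⟩
    · have := Nat.find_min hex (m := Nat.find hex - 1) (by omega)
      simpa using this
    · rw [Nat.sub_add_cancel (by omega)]; exact Nat.find_spec hex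
  have hkne : ξ.1 k ≠ ζ.1 k := by
    intro he
    apply hk1
    rw [pre_succ, pre_succ, hk, he]
  have hlen : ∀ m, k + 1 ≤ m → wlen ((pre ξ m)⁻¹ * pre ζ m) = (m - k) + (m - k) := by
    intro m hm
    rw [wlen, wlen_pre_inv_mul_pre hk hkne hm, List.length_append]
    have h1 := wlen_inv ((pre ξ k)⁻¹ * pre ξ m)
    rw [wlen_pre_pre ξ (by omega)] at h1
    have h2 := wlen_pre_pre ζ (k := k) (m := m) (by omega)
    rw [wlen] at h1 h2
    omega
  -- longer segments contain shorter ones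
  have hmono : ∀ m, k + 1 ≤ m → (pre ξ m)⁻¹ * pre ζ m ∈ FmA A L →
      (pre ξ (m + 1))⁻¹ * pre ζ (m + 1) ∈ FmA A L := by
    intro m hm hg
    have e : (pre ξ (m + 1))⁻¹ * pre ζ (m + 1) =
        (letterE (ξ.1 m))⁻¹ * ((pre ξ m)⁻¹ * pre ζ m * letterE (ζ.1 m)) := by
      rw [pre_succ, pre_succ]; group
    have hpne : pre ξ m ≠ pre ζ m := by
      intro he
      exact hkne (seq_eq_of_pre_eq (pre_eq_of_le hm he))
    have hnone : (pre ξ m)⁻¹ * pre ζ m ≠ 1 := by rwa [ne_eq, inv_mul_eq_one]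
    have h1 : firstL ((pre ξ m)⁻¹ * pre ζ m)⁻¹ ≠ firstL (letterE (ζ.1 m)) := by
      rw [firstL_letterE, show ((pre ξ m)⁻¹ * pre ζ m)⁻¹ = (pre ζ m)⁻¹ * pre ξ m by group,
        firstL_eq_of_wlen_le hpne (by rw [wlen_pre, wlen_pre])]
      exact firstL_pre_inv ζ m
    rw [e]
    apply FmA_mul_left
    · rw [inv_inv, firstL_letterE, firstL_mul h1 hnone,
        firstL_eq_of_wlen_le hpne.symm (by rw [wlen_pre, wlen_pre])]
      exact (firstL_pre_inv ξ m).symm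
    · exact FmA_mul_right h1 hg
  by_cases hg : ∃ m, k + 1 ≤ m ∧ (pre ξ m)⁻¹ * pre ζ m ∈ FmA A L
  · obtain ⟨m₀, h1, h2⟩ := hg
    refine ⟨m₀, fun m hm => ?_⟩
    induction m, hm using Nat.le_induction with
    | base => exact h2
    | succ m hm ih => exact hmono m (by omega) ih
  exfalso
  push Not at hg
  set m₁ := k + L + 2 with hm₁
  have hB : ∀ m, m₁ ≤ m → ∃ B, InSystem A B ∧ ∀ j ≤ wlen ((pre ξ m)⁻¹ * pre ζ m),
      pre ξ m * FreeGroup.mk ((rword ((pre ξ m)⁻¹ * pre ζ m)).take j) ∈ treeVerts B := by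
    intro m hm
    exact exists_tree_of_notMem_FmA hdiam _ _ (by rw [hlen m (by omega)]; omega) (hg m (by omega))
  -- the segment from `ξ_m` to `ζ_m` contains `ξ_j` and `ζ_j` for `k ≤ j ≤ m`
  have hends : ∀ m, m₁ ≤ m → ∃ B, InSystem A B ∧ ∀ j, k ≤ j → j ≤ m →
      pre ξ j ∈ treeVerts B ∧ pre ζ j ∈ treeVerts B := by
    intro m hm
    obtain ⟨B, hBs, hBt⟩ := hB m hm
    refine ⟨B, hBs, fun j hj hjm => ?_⟩
    have hword := wlen_pre_inv_mul_pre hk hkne (m := m) (by omega)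
    have hl := hlen m (by omega)
    have htake : ∀ x : Boundary n, ∀ i ≤ m - k,
        pre x k * FreeGroup.mk ((rword ((pre x k)⁻¹ * pre x m)).take i) = pre x (k + i) := by
      intro x i hi
      have e : (pre x k)⁻¹ * pre x m = FreeGroup.mk ((bpre x m).drop k) := by
        rw [inv_mul_eq_iff_eq_mul, pre, pre, FreeGroup.mul_mk, ← bpre_take x (by omega : k ≤ m),
          List.take_append_drop]
      rw [e, rword_mk_of_isReduced
        ((isReduced_bpre x m).infix (List.drop_suffix _ _).isInfix), pre, FreeGroup.mul_mk,
        ← bpre_take x (by omega : k ≤ m), ← List.take_add, bpre_take x (by omega), pre]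
    constructor
    · have h1 := hBt (m - j) (by omega)
      convert h1 using 1
      have hlx : wlen ((pre ξ k)⁻¹ * pre ξ m) = m - k := wlen_pre_pre ξ (by omega)
      rw [hword, List.take_append_of_le_length
        (by have h2 := wlen_inv ((pre ξ k)⁻¹ * pre ξ m); rw [wlen] at h2; omega)]
      have h3 := mk_take_inv ((pre ξ k)⁻¹ * pre ξ m) (m := m - j)
      rw [hlx, mul_assoc, inv_mul_eq_iff_eq_mul, htake ξ _ (by omega)] at h3
      rw [h3]; congr 1; omega
    · have h1 := hBt (m - k + (j - k)) (by omega)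
      convert h1 using 1
      have h2 := wlen_inv ((pre ξ k)⁻¹ * pre ξ m)
      rw [wlen_pre_pre ξ (by omega), wlen] at h2
      rw [hword, ← h2, List.take_length_add_append, ← FreeGroup.mul_mk, mk_rword, ← mul_assoc,
        show pre ξ m * ((pre ξ k)⁻¹ * pre ξ m)⁻¹ = pre ξ k by group, hk, htake ζ _ (by omega)]
      congr 1; omega
  obtain ⟨B, hBs, hB1⟩ := hends m₁ le_rfl
  have hall : ∀ m, m₁ ≤ m → ∀ j, k ≤ j → j ≤ m →
      pre ξ j ∈ treeVerts B ∧ pre ζ j ∈ treeVerts B := by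
    intro m hm
    obtain ⟨B', hBs', hB'⟩ := hends m hm
    have heq : B = B' := by
      by_contra hne
      have h1 := hdiam B B' hBs hBs' hne (pre ξ m₁) ⟨(hB1 m₁ (by omega) le_rfl).1,
        (hB' m₁ (by omega) hm).1⟩ (pre ζ m₁) ⟨(hB1 m₁ (by omega) le_rfl).2,
        (hB' m₁ (by omega) hm).2⟩
      rw [dist', hlen m₁ (by omega)] at h1
      omega
    rw [heq]; exact hB'
  apply h.2
  obtain ⟨i, g, hBg⟩ := id hBs
  refine ⟨i, g, ξ, ζ, rfl, ?_, ?_⟩ <;> rw [← hBg] <;>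
    refine mem_limitSet_of_treeVerts (hBs.fg hsys) (m₀ := m₁) fun m hm => ?_
  · exact (hall m hm m (by omega) le_rfl).1
  · exact (hall m hm m (by omega) le_rfl).2

end Good

/-! ### Shadows and boxes -/

section Shadow

variable {n r L : ℕ} {A : Fin r → Subgroup (F n)}

/-- The shadow of `Q` seen from `P`: the boundary points which lie on the other side of `Q`, that
is, leave `Q` in a direction different from that of `P`. It is decided by a prefix of length
`max |P| |Q|`. -/
def ShB (P Q : F n) : Set (Boundary n) :=
  {ξ | firstL (Q⁻¹ * P) ≠ firstL (Q⁻¹ * pre ξ (max (wlen P) (wlen Q)))}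

lemma shadow_succ {P Q : F n} (hne : P ≠ Q) {M : ℕ} (hP : wlen P ≤ M) (hQ : wlen Q ≤ M)
    (ξ : Boundary n) :
    firstL (Q⁻¹ * P) ≠ firstL (Q⁻¹ * pre ξ (M + 1)) ↔
      firstL (Q⁻¹ * P) ≠ firstL (Q⁻¹ * pre ξ M) := by
  by_cases h : Q = pre ξ M
  · have h1 : firstL (Q⁻¹ * P) = firstL Q⁻¹ :=
      firstL_eq_of_wlen_le hne (by rw [h, wlen_pre]; exact hP)
    have h2 : Q⁻¹ * P ≠ 1 := by rw [ne_eq, inv_mul_eq_one]; exact hne.symm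
    constructor
    · intro _
      rw [← h, inv_mul_cancel, firstL_one, ne_eq, firstL_eq_none]
      exact h2
    · intro _
      rw [pre_succ, ← h, inv_mul_cancel_left, firstL_letterE, h1]
      have := firstL_pre_inv ξ M
      rwa [← h] at this
  · rw [firstL_pre_succ hQ h]

lemma mem_ShB_iff {P Q : F n} (hne : P ≠ Q) {M : ℕ} (hP : wlen P ≤ M) (hQ : wlen Q ≤ M)
    (ξ : Boundary n) : ξ ∈ ShB P Q ↔ firstL (Q⁻¹ * P) ≠ firstL (Q⁻¹ * pre ξ M) := by
  have h : max (wlen P) (wlen Q) ≤ M := max_le hP hQ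
  induction M, h using Nat.le_induction with
  | base => rfl
  | succ M hM ih =>
    have h1 : wlen P ≤ M := (le_max_left _ _).trans hM
    have h2 : wlen Q ≤ M := (le_max_right _ _).trans hM
    rw [shadow_succ hne h1 h2]
    exact ih h1 h2

/-- Among vertices `p` not deeper than `Q`, only `Q` itself lies on the other side of `Q` as seen
from a vertex `P` not deeper than `Q`. -/
lemma shadow_vertex_iff {P Q p : F n} (hne : P ≠ Q) (hP : wlen P ≤ wlen Q)
    (hp : wlen p ≤ wlen Q) : firstL (Q⁻¹ * P) ≠ firstL (Q⁻¹ * p) ↔ p = Q := by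
  rw [firstL_eq_of_wlen_le hne hP]
  constructor
  · intro h
    by_contra hc
    exact h (firstL_eq_of_wlen_le hc hp).symm
  · rintro rfl h
    rw [inv_mul_cancel, firstL_one, firstL_eq_none] at h
    rw [inv_eq_one] at h
    subst h
    rw [wlen_one, Nat.le_zero, wlen_eq_zero] at hP
    exact hne hP

lemma mem_ShB_of_le {P Q : F n} (hne : P ≠ Q) (hP : wlen P ≤ wlen Q) (ξ : Boundary n) :
    ξ ∈ ShB P Q ↔ pre ξ (wlen Q) = Q := by
  rw [mem_ShB_iff hne hP le_rfl, shadow_vertex_iff hne hP (by rw [wlen_pre])]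

/-- The box of the segment `[P, Q]`: the classes of pairs of boundary points whose geodesic passes
through `P` and `Q`. It is the translate by `P` of the cylinder of `P⁻¹ Q`. -/
def Zset (P Q : F n) : Set (Sym2 (Boundary n)) :=
  {z | ∃ ξ ζ : Boundary n, z = s(ξ, ζ) ∧ ξ ∈ ShB Q P ∧ ζ ∈ ShB P Q}

lemma Zset_swap (P Q : F n) : Zset P Q = Zset Q P := by
  ext z
  constructor <;> rintro ⟨ξ, ζ, rfl, h1, h2⟩ <;> exact ⟨ζ, ξ, Sym2.eq_swap, h2, h1⟩

lemma mk_mem_Zset {P Q : F n} {ξ ζ : Boundary n} :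
    s(ξ, ζ) ∈ Zset P Q ↔ (ξ ∈ ShB Q P ∧ ζ ∈ ShB P Q) ∨ (ζ ∈ ShB Q P ∧ ξ ∈ ShB P Q) := by
  constructor
  · rintro ⟨a, b, h, ha, hb⟩
    rw [Sym2.eq_iff] at h
    rcases h with ⟨rfl, rfl⟩ | ⟨rfl, rfl⟩
    · exact Or.inl ⟨ha, hb⟩
    · exact Or.inr ⟨ha, hb⟩
  · rintro (⟨h1, h2⟩ | ⟨h1, h2⟩)
    · exact ⟨ξ, ζ, rfl, h1, h2⟩
    · exact ⟨ζ, ξ, Sym2.eq_swap, h1, h2⟩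

lemma firstL_ne_of_append {w u v : F n} (hw : w ≠ 1) (he : w = u * v)
    (hl : wlen w = wlen u + wlen v) : firstL u⁻¹ ≠ firstL v := by
  intro h
  by_cases hu : u = 1
  · subst hu
    rw [inv_one, firstL_one, eq_comm, firstL_eq_none] at h
    subst h
    exact hw (by rw [he, mul_one])
  · have := wlen_inv_mul_lt h (by rwa [ne_eq, inv_eq_one])
    rw [inv_inv, ← he, wlen_inv] at this
    omega

/-- A vertex of the segment `[P, Q]` separates the two shadows. -/
lemma firstL_ne_of_shadow {P Q u v : F n} (hPQ : P ≠ Q) (he : P⁻¹ * Q = u * v)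
    (hl : wlen (P⁻¹ * Q) = wlen u + wlen v) {x y : F n}
    (hx : firstL (P⁻¹ * Q) ≠ firstL (P⁻¹ * x)) (hy : firstL (Q⁻¹ * P) ≠ firstL (Q⁻¹ * y)) :
    firstL ((P * u)⁻¹ * x) ≠ firstL ((P * u)⁻¹ * y) := by
  have hw : P⁻¹ * Q ≠ 1 := by rwa [ne_eq, inv_mul_eq_one]
  have huv := firstL_ne_of_append hw he hl
  have ex : (P * u)⁻¹ * x = u⁻¹ * (P⁻¹ * x) := by group
  have ey : (P * u)⁻¹ * y = v * (Q⁻¹ * y) := by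
    rw [mul_inv_rev, mul_assoc, inv_mul_eq_iff_eq_mul, ← mul_assoc, ← he]; group
  have hw' : Q⁻¹ * P = v⁻¹ * u⁻¹ := by rw [← mul_inv_rev, ← he]; group
  have hvu : firstL v⁻¹⁻¹ ≠ firstL u⁻¹ := by rw [inv_inv]; exact huv.symm
  by_cases hu : u = 1
  · subst hu
    have hv : v ≠ 1 := by rintro rfl; exact hw (by rw [he, mul_one])
    rw [ey, firstL_mul _ hv, ex, inv_one, one_mul, ← show P⁻¹ * Q = v by rw [he, one_mul]]
    · exact hx.symm
    · rw [hw', inv_one, mul_one] at hy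
      exact hy
  rw [he, firstL_mul huv hu] at hx
  rw [ex, firstL_mul (by rwa [inv_inv]) (by rwa [ne_eq, inv_eq_one])]
  by_cases hv : v = 1
  · subst hv
    rw [ey, one_mul]
    rw [hw', inv_one, one_mul] at hy
    exact hy
  rw [hw', firstL_mul hvu (by rwa [ne_eq, inv_eq_one])] at hy
  rw [ey, firstL_mul hy hv]
  exact huv

lemma Zset_subset_relSet (hsys : IsSystem A) {P Q : F n} (hg : P⁻¹ * Q ∈ FmA A L) :
    Zset P Q ⊆ relSet A := by
  rintro _ ⟨ξ, ζ, rfl, hξ, hζ⟩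
  have hw := FmA_ne_one hg
  have hPQ : P ≠ Q := by rintro rfl; exact hw (inv_mul_cancel P)
  have key : ∀ j ≤ wlen (P⁻¹ * Q), ∀ m, wlen P ≤ m → wlen Q ≤ m →
      firstL ((P * FreeGroup.mk ((rword (P⁻¹ * Q)).take j))⁻¹ * pre ξ m) ≠
      firstL ((P * FreeGroup.mk ((rword (P⁻¹ * Q)).take j))⁻¹ * pre ζ m) := by
    intro j hj m h1 h2
    refine firstL_ne_of_shadow (v := FreeGroup.mk ((rword (P⁻¹ * Q)).drop j)) hPQ ?_ ?_
      ((mem_ShB_iff hPQ.symm h2 h1 _).1 hξ) ((mem_ShB_iff hPQ h1 h2 _).1 hζ)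
    · rw [FreeGroup.mul_mk, List.take_append_drop, mk_rword]
    · rw [wlen, wlen, wlen, rword_mk_take, rword_mk_of_isReduced ((isReduced_rword _).infix
        (List.drop_suffix _ _).isInfix), List.length_take, List.length_drop]
      rw [wlen] at hj
      omega
  constructor
  · intro hd
    have : ξ = ζ := by simpa using hd
    subst this
    exact key 0 (Nat.zero_le _) (max (wlen P) (wlen Q)) (le_max_left _ _) (le_max_right _ _) rfl
  · rintro ⟨i, g, ξ', ζ', he, h1, h2⟩
    set B := conjSub g (A i) with hBdef
    have hBsys : InSystem A B := ⟨i, g, rfl⟩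
    have hlim : ξ ∈ limitSet B ∧ ζ ∈ limitSet B := by
      rw [Sym2.eq_iff] at he
      rcases he with ⟨rfl, rfl⟩ | ⟨rfl, rfl⟩
      · exact ⟨h1, h2⟩
      · exact ⟨h2, h1⟩
    have hT : ∀ j ≤ wlen (P⁻¹ * Q),
        P * FreeGroup.mk ((rword (P⁻¹ * Q)).take j) ∈ treeVerts B := by
      intro j hj
      have := key j hj (wlen P + wlen Q +
        wlen (P * FreeGroup.mk ((rword (P⁻¹ * Q)).take j)) + 1) (by omega) (by omega)
      exact mem_treeVerts_of_limitSet (hBsys.ne_bot hsys) hlim.1 hlim.2 (by omega) this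
    obtain ⟨x, hx, s, t, hst⟩ := hg
    have hlen : wlen (P⁻¹ * Q) = s.length + wlen x + t.length := by
      rw [wlen, ← hst, List.length_append, List.length_append, wlen]
    have hpath : pathIn x (treeVerts (conjSub (P * FreeGroup.mk s)⁻¹ B)) := by
      intro m hm
      rw [mem_treeVerts_conjSub, inv_inv, mul_assoc, FreeGroup.mul_mk]
      have := hT (s.length + m) (by omega)
      rw [← hst, List.append_assoc, List.take_length_add_append,
        List.take_append_of_le_length (by exact hm)] at this
      exact this
    refine hx.2 i _ ⟨⟨(P * FreeGroup.mk s)⁻¹ * g, conjSub_conjSub _ _ _⟩, ?_⟩ hpath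
    have := hpath 0 (Nat.zero_le _)
    rwa [List.take_zero, ← FreeGroup.one_eq_mk] at this

lemma mk_mem_Zset_of_wlen_eq {P Q : F n} {M : ℕ} (hne : P ≠ Q) (hP : wlen P = M)
    (hQ : wlen Q = M) {ξ ζ : Boundary n} :
    s(ξ, ζ) ∈ Zset P Q ↔ (pre ξ M = P ∧ pre ζ M = Q) ∨ (pre ζ M = P ∧ pre ξ M = Q) := by
  rw [mk_mem_Zset]
  simp only [mem_ShB_of_le hne (hP.trans hQ.symm).le, mem_ShB_of_le hne.symm (hQ.trans hP.symm).le,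
    hP, hQ]

lemma cylinder_eq_Zset {w : F n} (hw : w ≠ 1) : cylinder w = Zset 1 w := by
  have hl : 1 ≤ wlen w := by
    rw [Nat.one_le_iff_ne_zero, ne_eq, wlen_eq_zero]; exact hw
  have hf : ∀ ξ : Boundary n, firstL (pre ξ (wlen w)) = some (ξ.1 0) := by
    intro ξ
    have h1 := firstL_pre_stable (v := 1) (ξ := ξ) (m := 1) (k := wlen w)
      (by rw [wlen_one]; omega) hl
    rw [inv_one, one_mul, one_mul] at h1
    rw [h1, pre_succ, pre_zero, one_mul, firstL_letterE]
  have h1 : ∀ ζ : Boundary n, ζ ∈ ShB 1 w ↔ pre ζ (wlen w) = w :=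
    mem_ShB_of_le hw.symm (by rw [wlen_one]; omega)
  have h2 : ∀ ξ : Boundary n, ξ ∈ ShB w 1 ↔ firstL w ≠ some (ξ.1 0) := by
    intro ξ
    rw [mem_ShB_iff hw le_rfl (by rw [wlen_one]; omega), inv_one, one_mul, one_mul, hf]
  ext z
  constructor
  · rintro ⟨ξ, ζ, rfl, h0, h⟩
    rw [wordPrefixOf_iff, wordPrefixOf_iff] at h
    rw [mk_mem_Zset, h1, h1, h2, h2]
    rcases h with h | h
    · refine Or.inr ⟨?_, h⟩
      rw [← h, hf]; simpa using h0
    · refine Or.inl ⟨?_, h⟩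
      rw [← h, hf]; simpa using h0.symm
  · rintro ⟨ξ, ζ, rfl, hξ, hζ⟩
    rw [h1] at hζ
    rw [h2, ← hζ, hf] at hξ
    refine ⟨ξ, ζ, rfl, ?_, Or.inr ((wordPrefixOf_iff _ _).2 hζ)⟩
    simpa [eq_comm] using hξ

end Shadow

/-! ### The action on the boundary -/

section Action

variable {n r L : ℕ} {A : Fin r → Subgroup (F n)}

/-- Left multiplication by `g` on a boundary point acts on long prefixes by left multiplication. -/
lemma pre_bAct (g : F n) (ξ : Boundary n) :
    ∃ c ≤ wlen g, ∀ M, wlen g ≤ M → pre (bAct g ξ) (M + wlen g - 2 * c) = g * pre ξ M := by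
  set S := { j | j ≤ (rword g).length ∧
    ∀ i < j, (rword g).reverse[i]? = some (linv (ξ.1 i)) } with hS
  have hbdd : BddAbove S := ⟨(rword g).length, fun j hj => hj.1⟩
  have hmem : cancelLen (rword g) ξ.1 ∈ S := Nat.sSup_mem ⟨0, Nat.zero_le _, by simp⟩ hbdd
  have hmax : cancelLen (rword g) ξ.1 + 1 ∉ S := fun h =>
    Nat.not_succ_le_self _ (le_csSup hbdd h : _ ≤ cancelLen (rword g) ξ.1)
  set c := cancelLen (rword g) ξ.1 with hc
  have hcl : c ≤ wlen g := hmem.1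
  set l := (rword g).take (wlen g - c) with hl
  have hwl : wlen g = (rword g).length := rfl
  have hll : l.length = wlen g - c := by
    rw [hl, List.length_take]; exact min_eq_left (by omega)
  have hdrop : (rword g).drop (wlen g - c) = FreeGroup.invRev (bpre ξ c) := by
    apply List.ext_getElem
    · rw [List.length_drop, FreeGroup.invRev_length, bpre_length]; omega
    · intro i h1 h2
      rw [FreeGroup.invRev_length, bpre_length] at h2
      have h3 := hmem.2 (c - 1 - i) (by omega)
      rw [List.getElem?_eq_getElem (by rw [List.length_reverse]; omega), Option.some_inj,
        List.getElem_reverse] at h3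
      simp only [List.getElem_drop, FreeGroup.invRev, List.getElem_reverse, List.getElem_map,
        List.length_map, bpre_length]
      have h4 : (bpre ξ c)[c - 1 - i]'(by rw [bpre_length]; omega) = ξ.1 (c - 1 - i) := by
        simp [bpre]
      rw [h4]
      refine Eq.trans ?_ h3
      congr 1
      omega
  have hlast : ∀ a, l.getLast? = some a → ξ.1 c ≠ linv a := by
    intro a ha he
    have hl0 : 0 < l.length := by
      rw [List.length_pos_iff]; rintro h; rw [h] at ha; simp at ha
    apply hmax
    refine ⟨by omega, fun i hi => ?_⟩
    rcases Nat.lt_succ_iff_lt_or_eq.1 hi with h | rfl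
    · exact hmem.2 i h
    · rw [he, linv_linv, List.getElem?_reverse (by omega), ← ha, List.getLast?_eq_getElem?, hll, hl,
        List.getElem?_take_of_lt (by omega)]
      congr 1
      omega
  have hg : g = FreeGroup.mk l * (pre ξ c)⁻¹ := by
    rw [pre, FreeGroup.inv_mk, ← hdrop, FreeGroup.mul_mk, List.take_append_drop, mk_rword]
  have hred : ∀ M, c ≤ M → FreeGroup.IsReduced (l ++ (bpre ξ M).drop c) := by
    intro M hM
    rw [FreeGroup.IsReduced, List.isChain_append]
    refine ⟨(isReduced_rword g).infix (List.take_prefix _ _).isInfix,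
      (isReduced_bpre ξ M).infix (List.drop_suffix _ _).isInfix, ?_⟩
    intro a ha b hb
    rw [reduced_pair_iff]
    have hb' : b = ξ.1 c := by
      rw [Option.mem_def, List.head?_drop, bpre, List.getElem?_map, Option.map_eq_some_iff] at hb
      obtain ⟨j, hj, rfl⟩ := hb
      rw [List.getElem?_eq_some_iff] at hj
      obtain ⟨_, hj⟩ := hj
      rw [List.getElem_range] at hj
      rw [hj]
    rw [hb']
    exact hlast a ha
  have hseq : ∀ M, c ≤ M → (List.range (M + wlen g - 2 * c)).map (actSeq g ξ.1) =
      l ++ (bpre ξ M).drop c := by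
    intro M hM
    apply List.ext_getElem
    · rw [List.length_map, List.length_range, List.length_append, List.length_drop, hll,
        bpre_length]
      omega
    · intro i h1 h2
      rw [List.getElem_map, List.getElem_range, List.getElem_append, actSeq]
      simp only [← hc, ← hwl]
      by_cases hi : i < wlen g - c
      · rw [dif_pos hi, dif_pos (by omega)]
        simp [hl]
      · rw [dif_neg hi, dif_neg (by omega)]
        simp only [List.getElem_drop, bpre, List.getElem_map, List.getElem_range, hll]
        exact congrArg ξ.1 (by omega)
  have hIsRed : IsRed (actSeq g ξ.1) := by
    intro i
    have h1 := hred (i + 2 + 2 * c) (by omega)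
    rw [← hseq _ (by omega), FreeGroup.IsReduced, List.isChain_iff_getElem] at h1
    have h2 := h1 i (by rw [List.length_map, List.length_range]; omega)
    rw [reduced_pair_iff] at h2
    simpa using h2
  refine ⟨c, hcl, fun M hM => ?_⟩
  have : bAct g ξ = ⟨actSeq g ξ.1, hIsRed⟩ := dif_pos hIsRed
  have hb : bpre (bAct g ξ) (M + wlen g - 2 * c) = l ++ (bpre ξ M).drop c := by
    rw [this]; exact hseq M (by omega)
  have hs : pre ξ M = pre ξ c * FreeGroup.mk ((bpre ξ M).drop c) := by
    rw [pre, pre, FreeGroup.mul_mk, ← bpre_take ξ (by omega : c ≤ M), List.take_append_drop]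
  rw [pre, hb, ← FreeGroup.mul_mk, hs, ← mul_assoc]
  congr 1
  exact (eq_mul_inv_iff_mul_eq.1 hg).symm

/-- The action moves shadows by left translation. -/
lemma bAct_mem_ShB (g : F n) {P Q : F n} (hne : P ≠ Q) (ξ : Boundary n) :
    bAct g ξ ∈ ShB P Q ↔ ξ ∈ ShB (g⁻¹ * P) (g⁻¹ * Q) := by
  obtain ⟨c, hc, h⟩ := pre_bAct g ξ
  set M := wlen P + wlen Q + wlen g + wlen (g⁻¹ * P) + wlen (g⁻¹ * Q) with hM
  have hne' : g⁻¹ * P ≠ g⁻¹ * Q := fun h => hne (mul_left_cancel h)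
  rw [mem_ShB_iff hne (M := M + wlen g - 2 * c) (by omega) (by omega),
    mem_ShB_iff hne' (M := M) (by omega) (by omega), h M (by omega)]
  have e1 : (g⁻¹ * Q)⁻¹ * (g⁻¹ * P) = Q⁻¹ * P := by group
  have e2 : (g⁻¹ * Q)⁻¹ * pre ξ M = Q⁻¹ * (g * pre ξ M) := by group
  rw [e1, e2]

lemma dbAct_mem_Zset (g : F n) {P Q : F n} (hne : P ≠ Q) (z : Sym2 (Boundary n)) :
    dbAct g z ∈ Zset P Q ↔ z ∈ Zset (g⁻¹ * P) (g⁻¹ * Q) := by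
  induction z with
  | _ ξ ζ =>
    rw [dbAct, Sym2.map_mk, mk_mem_Zset, mk_mem_Zset]
    simp only [bAct_mem_ShB g hne, bAct_mem_ShB g hne.symm]

lemma exists_mem_Zset (hsys : IsSystem A) (hdiam : DiamBound A L) {z : Sym2 (Boundary n)}
    (hz : z ∈ relSet A) : ∃ m₀, ∀ m ≥ m₀, ∃ P Q : F n, wlen P = m ∧ wlen Q = m ∧
      P⁻¹ * Q ∈ FmA A L ∧ z ∈ Zset P Q := by
  induction z with
  | _ ξ ζ =>
    obtain ⟨m₀, h⟩ := exists_good hsys hdiam hz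
    refine ⟨m₀, fun m hm => ⟨pre ξ m, pre ζ m, wlen_pre _ _, wlen_pre _ _, h m hm, ?_⟩⟩
    have hne : pre ξ m ≠ pre ζ m := by
      intro he
      exact FmA_ne_one (h m hm) (by rw [he, inv_mul_cancel])
    rw [mk_mem_Zset_of_wlen_eq hne (wlen_pre _ _) (wlen_pre _ _)]
    exact Or.inl ⟨rfl, rfl⟩

lemma ne_of_good {P Q : F n} (hg : P⁻¹ * Q ∈ FmA A L) : P ≠ Q := by
  rintro rfl
  exact FmA_ne_one hg (inv_mul_cancel P)

lemma dbAct_mem_relSet (hsys : IsSystem A) (hdiam : DiamBound A L) (g : F n)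
    {z : Sym2 (Boundary n)} (hz : z ∈ relSet A) : dbAct g z ∈ relSet A := by
  obtain ⟨m₀, h⟩ := exists_mem_Zset hsys hdiam hz
  obtain ⟨P, Q, -, -, hg, hPQ⟩ := h m₀ le_rfl
  have e : (g * P)⁻¹ * (g * Q) = P⁻¹ * Q := by group
  have hg' : (g * P)⁻¹ * (g * Q) ∈ FmA A L := by rwa [e]
  refine Zset_subset_relSet hsys hg' ?_
  rw [dbAct_mem_Zset g (ne_of_good hg'), inv_mul_cancel_left, inv_mul_cancel_left]
  exact hPQ

/-- The box of `[P, Q]` inside `∂²(F_n, 𝒜)`. -/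
def Zrel (A : Fin r → Subgroup (F n)) (P Q : F n) : Set ↥(relSet A) :=
  Subtype.val ⁻¹' Zset P Q

lemma relAct_preimage_Zrel (hsys : IsSystem A) (hdiam : DiamBound A L) (g : F n) {P Q : F n}
    (hne : P ≠ Q) : relAct A g ⁻¹' Zrel A P Q = Zrel A (g⁻¹ * P) (g⁻¹ * Q) := by
  ext z
  have h : relAct A g z = ⟨dbAct g z.1, dbAct_mem_relSet hsys hdiam g z.2⟩ :=
    dif_pos (dbAct_mem_relSet hsys hdiam g z.2)
  rw [Set.mem_preimage, h]
  exact dbAct_mem_Zset g hne z.1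

end Action

/-! ### Topology of the relative double boundary -/

section Topology

open TopologicalSpace Topology

variable {n r L : ℕ} {A : Fin r → Subgroup (F n)}

lemma isClosed_isRed : IsClosed {ξ : ℕ → Letter n | IsRed ξ} := by
  simp only [IsRed, Set.ofPred_forall]
  refine isClosed_iInter fun i => ?_
  have h : Continuous fun ξ : ℕ → Letter n => (ξ (i + 1), ξ i) := by fun_prop
  exact (isClosed_discrete {p : Letter n × Letter n | p.1 ≠ linv p.2}).preimage h

instance : CompactSpace (Boundary n) :=
  isCompact_iff_compactSpace.1 (isClosed_isRed (n := n)).isCompact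

instance : T2Space (Boundary n) :=
  inferInstanceAs (T2Space {ξ : ℕ → Letter n // IsRed ξ})

lemma isLocallyConstant_pre (m : ℕ) : IsLocallyConstant fun ξ : Boundary n => pre ξ m := by
  induction m with
  | zero => simp only [pre_zero]; exact IsLocallyConstant.const 1
  | succ m ih =>
    have h1 : Continuous fun ξ : Boundary n => ξ.1 m :=
      (continuous_apply m).comp continuous_subtype_val
    have h2 : IsLocallyConstant fun ξ : Boundary n => letterE (ξ.1 m) :=
      (IsLocallyConstant.of_discrete letterE).comp_continuous h1
    simp only [pre_succ]
    exact ih.mul h2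

lemma isOpen_ShB (P Q : F n) : IsOpen (ShB P Q) :=
  isLocallyConstant_pre (max (wlen P) (wlen Q)) {x | firstL (Q⁻¹ * P) ≠ firstL (Q⁻¹ * x)}

lemma isClosed_ShB (P Q : F n) : IsClosed (ShB P Q) :=
  ⟨isLocallyConstant_pre (max (wlen P) (wlen Q)) {x | firstL (Q⁻¹ * P) ≠ firstL (Q⁻¹ * x)}ᶜ⟩

lemma exists_pre_subset {U : Set (Boundary n)} (hU : IsOpen U) {ξ : Boundary n} (hξ : ξ ∈ U) :
    ∃ m, ∀ ξ' : Boundary n, pre ξ' m = pre ξ m → ξ' ∈ U := by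
  obtain ⟨V, hV, rfl⟩ := isOpen_induced_iff.1 hU
  obtain ⟨I, u, hu, hsub⟩ := isOpen_pi_iff.1 hV ξ.1 hξ
  refine ⟨I.sup id + 1, fun ξ' h => hsub fun i hi => ?_⟩
  have h1 : i ≤ I.sup id := Finset.le_sup (f := id) hi
  have h2 : ξ'.1 i = ξ.1 i := seq_eq_of_pre_eq (pre_eq_of_le (by omega : i + 1 ≤ I.sup id + 1) h)
  rw [h2]
  exact (hu i hi).2

lemma isOpenQuotientMap_sym2 :
    IsOpenQuotientMap (Quot.mk (Sym2.Rel (Boundary n)) : _ → Sym2 (Boundary n)) := by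
  refine ⟨Quot.mk_surjective, continuous_quot_mk, fun U hU => ?_⟩
  rw [← isQuotientMap_quot_mk.isOpen_preimage]
  have : (Quot.mk (Sym2.Rel (Boundary n))) ⁻¹' (Quot.mk (Sym2.Rel (Boundary n)) '' U) =
      U ∪ Prod.swap ⁻¹' U := by
    ext ⟨a, b⟩
    constructor
    · rintro ⟨⟨c, d⟩, hc, h⟩
      rcases Sym2.eq_iff.1 h with ⟨rfl, rfl⟩ | ⟨rfl, rfl⟩
      · exact Or.inl hc
      · exact Or.inr hc
    · rintro (h | h)
      · exact ⟨_, h, rfl⟩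
      · exact ⟨_, h, Sym2.eq_swap⟩
  rw [this]
  exact hU.union (hU.preimage continuous_swap)

instance : T2Space (Sym2 (Boundary n)) := by
  rw [t2Space_iff_of_isOpenQuotientMap isOpenQuotientMap_sym2]
  have : {q : (Boundary n × Boundary n) × (Boundary n × Boundary n) |
      Quot.mk (Sym2.Rel (Boundary n)) q.1 = Quot.mk (Sym2.Rel (Boundary n)) q.2} =
      {q | q.1 = q.2} ∪ {q | q.1 = q.2.swap} := by
    ext ⟨⟨a, b⟩, ⟨c, d⟩⟩
    simp
  rw [this]
  exact (isClosed_eq continuous_fst continuous_snd).union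
    (isClosed_eq continuous_fst (continuous_swap.comp continuous_snd))

instance : BorelSpace (Sym2 (Boundary n)) := ⟨rfl⟩

lemma Zset_eq_image (P Q : F n) :
    Zset P Q = Quot.mk (Sym2.Rel (Boundary n)) '' (ShB Q P ×ˢ ShB P Q) := by
  ext z
  constructor
  · rintro ⟨ξ, ζ, rfl, h1, h2⟩
    exact ⟨(ξ, ζ), ⟨h1, h2⟩, rfl⟩
  · rintro ⟨⟨ξ, ζ⟩, ⟨h1, h2⟩, rfl⟩
    exact ⟨ξ, ζ, rfl, h1, h2⟩

lemma isOpen_Zset (P Q : F n) : IsOpen (Zset P Q) := by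
  rw [Zset_eq_image]
  exact isOpenQuotientMap_sym2.isOpenMap _ ((isOpen_ShB Q P).prod (isOpen_ShB P Q))

lemma isCompact_Zset (P Q : F n) : IsCompact (Zset P Q) := by
  rw [Zset_eq_image]
  exact ((isClosed_ShB Q P).isCompact.prod (isClosed_ShB P Q).isCompact).image continuous_quot_mk

lemma isOpen_Zrel (P Q : F n) : IsOpen (Zrel A P Q) :=
  (isOpen_Zset P Q).preimage continuous_subtype_val

lemma isClosed_Zrel (P Q : F n) : IsClosed (Zrel A P Q) :=
  (isCompact_Zset P Q).isClosed.preimage continuous_subtype_val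

lemma isCompact_Zrel (hsys : IsSystem A) {P Q : F n} (hg : P⁻¹ * Q ∈ FmA A L) :
    IsCompact (Zrel A P Q) := by
  rw [Subtype.isCompact_iff, Zrel, Subtype.image_preimage_coe,
    Set.inter_eq_self_of_subset_right (Zset_subset_relSet hsys hg)]
  exact isCompact_Zset P Q

lemma isOpen_relSet (hsys : IsSystem A) (hdiam : DiamBound A L) : IsOpen (relSet A) := by
  rw [isOpen_iff_mem_nhds]
  intro z hz
  obtain ⟨m₀, h⟩ := exists_mem_Zset hsys hdiam hz
  obtain ⟨P, Q, -, -, hg, hPQ⟩ := h m₀ le_rfl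
  exact Filter.mem_of_superset ((isOpen_Zset P Q).mem_nhds hPQ) (Zset_subset_relSet hsys hg)

lemma locallyCompactSpace_relSet (hsys : IsSystem A) (hdiam : DiamBound A L) :
    LocallyCompactSpace ↥(relSet A) :=
  (isOpen_relSet hsys hdiam).locallyCompactSpace

/-- The boxes of segments with label in `F_n − 𝒜` whose endpoints have the same length. -/
def boxes (A : Fin r → Subgroup (F n)) (L : ℕ) : Set (Set ↥(relSet A)) :=
  {s | ∃ P Q : F n, wlen P = wlen Q ∧ P⁻¹ * Q ∈ FmA A L ∧ s = Zrel A P Q}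

lemma countable_boxes : (boxes A L).Countable := by
  have : Countable (F n) := Function.Injective.countable FreeGroup.toWord_injective
  refine (Set.countable_range fun p : F n × F n => Zrel A p.1 p.2).mono ?_
  rintro _ ⟨P, Q, -, -, rfl⟩
  exact ⟨(P, Q), rfl⟩

lemma isTopologicalBasis_boxes (hsys : IsSystem A) (hdiam : DiamBound A L) :
    IsTopologicalBasis (boxes A L) := by
  refine isTopologicalBasis_of_isOpen_of_nhds ?_ ?_
  · rintro _ ⟨P, Q, -, -, rfl⟩
    exact isOpen_Zrel P Q
  · rintro ⟨z, hz⟩ U hzU hU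
    obtain ⟨V, hV, rfl⟩ := isOpen_induced_iff.1 hU
    induction z with
    | _ ξ ζ =>
      have hV' := hV.preimage (continuous_quot_mk (r := Sym2.Rel (Boundary n)))
      obtain ⟨u, v, hu, hv, hξ, hζ, huv⟩ := isOpen_prod_iff.1 hV' ξ ζ hzU
      obtain ⟨m₁, h₁⟩ := exists_pre_subset hu hξ
      obtain ⟨m₂, h₂⟩ := exists_pre_subset hv hζ
      obtain ⟨m₀, h₀⟩ := exists_good hsys hdiam hz
      set m := m₀ + m₁ + m₂
      have hg := h₀ m (by omega)
      have hmem : ∀ ξ' ζ' : Boundary n, s(ξ', ζ') ∈ Zset (pre ξ m) (pre ζ m) ↔ _ := fun ξ' ζ' =>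
        mk_mem_Zset_of_wlen_eq (ne_of_good hg) (wlen_pre _ _) (wlen_pre _ _)
      refine ⟨_, ⟨pre ξ m, pre ζ m, by rw [wlen_pre, wlen_pre], hg, rfl⟩, ?_, ?_⟩
      · exact (hmem ξ ζ).2 (Or.inl ⟨rfl, rfl⟩)
      · have key : ∀ ξ' ζ' : Boundary n, pre ξ' m = pre ξ m → pre ζ' m = pre ζ m →
            s(ξ', ζ') ∈ V := fun ξ' ζ' e1 e2 =>
          huv (a := (ξ', ζ')) ⟨h₁ _ (pre_eq_of_le (by omega) e1), h₂ _ (pre_eq_of_le (by omega) e2)⟩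
        rintro ⟨w, hw⟩ hwZ
        induction w with
        | _ ξ' ζ' =>
          rcases (hmem ξ' ζ').1 hwZ with ⟨e1, e2⟩ | ⟨e1, e2⟩
          · exact key _ _ e1 e2
          · have := key _ _ e1 e2
            rw [Sym2.eq_swap] at this
            exact this

/-- A box which meets a box of smaller level is contained in it. -/
lemma Zset_subset_of_mem {P Q P' Q' : F n} (hne : P ≠ Q) (hne' : P' ≠ Q') (h : wlen P = wlen Q)
    (h' : wlen P' = wlen Q') (hle : wlen P ≤ wlen P') {z : Sym2 (Boundary n)}
    (hz : z ∈ Zset P Q) (hz' : z ∈ Zset P' Q') : Zset P' Q' ⊆ Zset P Q := by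
  intro y hy
  induction z with
  | _ ξ ζ =>
    induction y with
    | _ a b =>
      rw [mk_mem_Zset_of_wlen_eq hne' h' rfl] at hz' hy
      rw [mk_mem_Zset_of_wlen_eq hne h rfl] at hz ⊢
      have key : ∀ x y : Boundary n, pre x (wlen Q') = pre y (wlen Q') →
          pre x (wlen Q) = pre y (wlen Q) := fun x y e => pre_eq_of_le (by omega) e
      rcases hz' with ⟨h1, h2⟩ | ⟨h1, h2⟩ <;> rcases hy with ⟨h3, h4⟩ | ⟨h3, h4⟩ <;>
        rw [key _ _ (h3.trans h1.symm), key _ _ (h4.trans h2.symm)] <;> tauto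

lemma isPiSystem_boxes : IsPiSystem (boxes A L) := by
  rintro _ ⟨P, Q, h, hg, rfl⟩ _ ⟨P', Q', h', hg', rfl⟩ ⟨z, hz, hz'⟩
  rcases le_total (wlen P) (wlen P') with hle | hle
  · refine ⟨P', Q', h', hg', Set.inter_eq_self_of_subset_right (Set.preimage_mono ?_)⟩
    exact Zset_subset_of_mem (ne_of_good hg) (ne_of_good hg') h h' hle hz hz'
  · refine ⟨P, Q, h, hg, Set.inter_eq_self_of_subset_left (Set.preimage_mono ?_)⟩
    exact Zset_subset_of_mem (ne_of_good hg') (ne_of_good hg) h' h hle hz' hz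

lemma generateFrom_boxes (hsys : IsSystem A) (hdiam : DiamBound A L) :
    (inferInstance : MeasurableSpace ↥(relSet A)) = .generateFrom (boxes A L) := by
  have hb := isTopologicalBasis_boxes hsys hdiam
  have := hb.secondCountableTopology countable_boxes
  rw [← hb.borel_eq_generateFrom]
  exact BorelSpace.measurable_eq

/-- Measures on `∂²(F_n, 𝒜)` are determined by finite values on boxes. -/
lemma measure_ext_boxes (hsys : IsSystem A) (hdiam : DiamBound A L) {μ ν : Measure ↥(relSet A)}
    (hfin : ∀ P Q : F n, wlen P = wlen Q → P⁻¹ * Q ∈ FmA A L → μ (Zrel A P Q) ≠ ⊤)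
    (h : ∀ P Q : F n, wlen P = wlen Q → P⁻¹ * Q ∈ FmA A L → μ (Zrel A P Q) = ν (Zrel A P Q)) :
    μ = ν := by
  refine Measure.ext_of_generateFrom_of_cover_subset (generateFrom_boxes hsys hdiam)
    isPiSystem_boxes subset_rfl countable_boxes (isTopologicalBasis_boxes hsys hdiam).sUnion_eq
    ?_ ?_
  · rintro _ ⟨P, Q, h1, h2, rfl⟩
    exact hfin P Q h1 h2
  · rintro _ ⟨P, Q, h1, h2, rfl⟩
    exact h P Q h1 h2

lemma measurable_relAct (hsys : IsSystem A) (hdiam : DiamBound A L) (g : F n) :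
    Measurable (relAct A g) := by
  have h : @Measurable _ _ _ (.generateFrom (boxes A L)) (relAct A g) := by
    refine measurable_generateFrom ?_
    rintro _ ⟨P, Q, h1, h2, rfl⟩
    rw [relAct_preimage_Zrel hsys hdiam g (ne_of_good h2)]
    exact (isOpen_Zrel _ _).measurableSet
  rwa [← generateFrom_boxes hsys hdiam] at h

/-- The value of an invariant measure on a box is its value on a cylinder. -/
lemma measure_Zrel (hsys : IsSystem A) (hdiam : DiamBound A L) {μ : Measure ↥(relSet A)}
    (hμ : ∀ (g : F n) (s : Set ↥(relSet A)), MeasurableSet s → μ (relAct A g ⁻¹' s) = μ s)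
    {P Q : F n} (hg : P⁻¹ * Q ∈ FmA A L) : μ (Zrel A P Q) = μ (relCyl A (P⁻¹ * Q)) := by
  rw [← hμ P _ (isOpen_Zrel P Q).measurableSet, relAct_preimage_Zrel hsys hdiam P (ne_of_good hg),
    inv_mul_cancel, relCyl, cylinder_eq_Zset (FmA_ne_one hg), Zrel]

end Topology

/-! ### Summation over a sphere -/

section Sphere

variable {n r L : ℕ} {A : Fin r → Subgroup (F n)}

lemma finite_sphere (n M : ℕ) : {p : F n | wlen p = M}.Finite :=
  Set.Finite.of_injOn (f := rword) (t := {l : List (Letter n) | l.length = M}) (fun _ h => h)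
    FreeGroup.toWord_injective.injOn (List.finite_length_eq _ M)

/-- The words of length `M`. -/
def sphere (n M : ℕ) : Finset (F n) := (finite_sphere n M).toFinset

lemma mem_sphere {M : ℕ} {p : F n} : p ∈ sphere n M ↔ wlen p = M := by
  rw [sphere, Set.Finite.mem_toFinset]; rfl

lemma firstL_letterE_inv_mul_iff {b : Letter n} {u : F n} :
    firstL ((letterE b)⁻¹ * u) ≠ some (linv b) ↔ firstL u = some b := by
  constructor
  · intro h
    by_contra hc
    rw [letterE_inv] at h
    exact h (firstL_letterE_mul (by rwa [linv_linv]))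
  · intro h
    obtain ⟨v, rfl, -, hv⟩ := exists_of_firstL h
    rwa [inv_mul_cancel_left]

/-- Iterated additivity: the mass of `[p, q]` is distributed among the vertices of the sphere of
radius `M` which lie behind `q` as seen from `p`. -/
lemma sum_shadow {η : F n → NNReal}
    (hadd : ∀ w ∈ FmA A L, η w = ∑ b : Letter n,
      if wlen (w * letterE b) = wlen w + 1 then η (w * letterE b) else 0)
    {M : ℕ} {p : F n} (hp : wlen p ≤ M) {q : F n} (hq : wlen q ≤ M) (hg : p⁻¹ * q ∈ FmA A L) :
    ∑ x ∈ sphere n M, (if firstL (q⁻¹ * p) ≠ firstL (q⁻¹ * x) then η (p⁻¹ * x) else 0) =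
      η (p⁻¹ * q) := by
  -- the distance from `p` to `q` grows along the recursion and is bounded by `2 * M`
  obtain ⟨k, hk⟩ : ∃ k, 2 * M ≤ wlen (p⁻¹ * q) + k := ⟨2 * M, by omega⟩
  induction k generalizing q with
  | zero =>
    have hne := ne_of_good hg
    have h1 := wlen_mul_le p⁻¹ q
    rw [wlen_inv] at h1
    have hqM : wlen q = M := by omega
    rw [Finset.sum_eq_single_of_mem q (mem_sphere.2 hqM)]
    · rw [if_pos ((shadow_vertex_iff hne (by omega) le_rfl).2 rfl)]
    · intro x hx hxq
      rw [mem_sphere] at hx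
      rw [if_neg]
      exact fun h => hxq ((shadow_vertex_iff hne (by omega) (by omega)).1 h)
  | succ k ih =>
    have hne := ne_of_good hg
    rcases hq.eq_or_lt with hqM | hqM
    · rw [Finset.sum_eq_single_of_mem q (mem_sphere.2 hqM)]
      · rw [if_pos ((shadow_vertex_iff hne (by omega) le_rfl).2 rfl)]
      · intro x hx hxq
        rw [mem_sphere] at hx
        rw [if_neg]
        exact fun h => hxq ((shadow_vertex_iff hne (by omega) (by omega)).1 h)
    have hinv : (p⁻¹ * q)⁻¹ = q⁻¹ * p := by group
    rw [hadd _ hg]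
    have hterm : ∀ b : Letter n,
        (if wlen (p⁻¹ * q * letterE b) = wlen (p⁻¹ * q) + 1 then η (p⁻¹ * q * letterE b) else 0) =
        ∑ x ∈ sphere n M, if firstL (q⁻¹ * p) ≠ some b ∧ firstL (q⁻¹ * x) = some b then
          η (p⁻¹ * x) else 0 := by
      intro b
      by_cases hb : firstL (q⁻¹ * p) ≠ some b
      · have hlen : wlen (p⁻¹ * q * letterE b) = wlen (p⁻¹ * q) + 1 := by
          rw [wlen_mul_letterE_iff, hinv]; exact hb
        have hg' : p⁻¹ * (q * letterE b) ∈ FmA A L := by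
          rw [← mul_assoc]
          exact FmA_mul_right (by rw [hinv, firstL_letterE]; exact hb) hg
        have hqb : wlen (q * letterE b) ≤ M := by
          have := wlen_mul_le q (letterE b)
          rw [wlen_letterE] at this
          omega
        rw [if_pos hlen, mul_assoc,
          ← ih hqb hg' (by rw [← mul_assoc, hlen]; omega)]
        refine Finset.sum_congr rfl fun x _ => ?_
        have h1 : firstL ((q * letterE b)⁻¹ * p) = some (linv b) := by
          rw [mul_inv_rev, mul_assoc]
          by_contra hc
          exact hb (firstL_letterE_inv_mul_iff.1 hc)
        have h2 : firstL ((q * letterE b)⁻¹ * p) ≠ firstL ((q * letterE b)⁻¹ * x) ↔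
            firstL (q⁻¹ * p) ≠ some b ∧ firstL (q⁻¹ * x) = some b := by
          rw [h1, mul_inv_rev, mul_assoc, ← firstL_letterE_inv_mul_iff (u := q⁻¹ * x)]
          exact ⟨fun h => ⟨hb, h.symm⟩, fun h => h.2.symm⟩
        simp only [h2]
      · rw [if_neg, Finset.sum_eq_zero]
        · intro x _
          rw [if_neg]
          exact fun h => hb h.1
        · rw [wlen_mul_letterE_iff, hinv]; exact hb
    rw [Finset.sum_congr rfl fun b _ => hterm b, Finset.sum_comm]
    refine Finset.sum_congr rfl fun x hx => ?_
    rw [mem_sphere] at hx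
    have hxq : q⁻¹ * x ≠ 1 := by
      rw [ne_eq, inv_mul_eq_one]; rintro rfl; omega
    obtain ⟨b, hb⟩ := exists_firstL hxq
    rw [Finset.sum_eq_single b]
    · simp [hb]
    · intro c _ hc
      rw [if_neg]
      rintro ⟨-, h⟩
      rw [hb, Option.some_inj] at h
      exact hc h.symm
    · intro h
      exact absurd (Finset.mem_univ b) h

/-- If `p` lies behind `P` as seen from `Q`, then `P` and `p` are seen from `Q` in the same
direction and the label of `[p, Q]` contains that of `[P, Q]`. -/
lemma behind {P Q p : F n} (hg : P⁻¹ * Q ∈ FmA A L)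
    (h : firstL (P⁻¹ * Q) ≠ firstL (P⁻¹ * p)) :
    firstL (Q⁻¹ * p) = firstL (Q⁻¹ * P) ∧ p⁻¹ * Q ∈ FmA A L := by
  have e1 : (Q⁻¹ * P)⁻¹ = P⁻¹ * Q := by group
  have e2 : Q⁻¹ * p = (Q⁻¹ * P) * (P⁻¹ * p) := by group
  have e3 : p⁻¹ * Q = (P⁻¹ * p)⁻¹ * (P⁻¹ * Q) := by group
  constructor
  · rw [e2, firstL_mul (by rwa [e1])]
    rw [ne_eq, inv_mul_eq_one]
    exact (ne_of_good hg).symm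
  · rw [e3]
    exact FmA_mul_left (by rw [inv_inv]; exact h.symm) hg

lemma good_of_shadow {P Q p q : F n} (hg : P⁻¹ * Q ∈ FmA A L)
    (hp : firstL (P⁻¹ * Q) ≠ firstL (P⁻¹ * p)) (hq : firstL (Q⁻¹ * P) ≠ firstL (Q⁻¹ * q)) :
    p⁻¹ * q ∈ FmA A L := by
  obtain ⟨h1, h2⟩ := behind hg hp
  have h3 : Q⁻¹ * p ∈ FmA A L := by
    have := FmA_inv h2
    rwa [show (p⁻¹ * Q)⁻¹ = Q⁻¹ * p by group] at this
  have h4 := FmA_inv (behind h3 (h1 ▸ hq)).2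
  rwa [show (q⁻¹ * p)⁻¹ = p⁻¹ * q by group] at h4

lemma good_symm {P Q : F n} (hg : P⁻¹ * Q ∈ FmA A L) : Q⁻¹ * P ∈ FmA A L := by
  have := FmA_inv hg
  rwa [show (P⁻¹ * Q)⁻¹ = Q⁻¹ * P by group] at this

/-- The mass of `[P, Q]` is distributed among the pairs of vertices of the sphere of radius `M`
whose geodesic passes through `P` and then `Q`. -/
lemma sum_sum_shadow {η : F n → NNReal} (hinv : ∀ w ∈ FmA A L, η w⁻¹ = η w)
    (hadd : ∀ w ∈ FmA A L, η w = ∑ b : Letter n,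
      if wlen (w * letterE b) = wlen w + 1 then η (w * letterE b) else 0)
    {M : ℕ} {P Q : F n} (hP : wlen P ≤ M) (hQ : wlen Q ≤ M) (hg : P⁻¹ * Q ∈ FmA A L) :
    ∑ p ∈ sphere n M, ∑ q ∈ sphere n M,
      (if firstL (P⁻¹ * Q) ≠ firstL (P⁻¹ * p) ∧ firstL (Q⁻¹ * P) ≠ firstL (Q⁻¹ * q) then
        η (p⁻¹ * q) else 0) = η (P⁻¹ * Q) := by
  have hinv' : ∀ x y : F n, x⁻¹ * y ∈ FmA A L → η (x⁻¹ * y) = η (y⁻¹ * x) := by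
    intro x y h
    rw [← hinv _ h]; congr 1; group
  rw [hinv' _ _ hg, ← sum_shadow hadd hQ hP (good_symm hg)]
  refine Finset.sum_congr rfl fun p hp => ?_
  rw [mem_sphere] at hp
  by_cases h : firstL (P⁻¹ * Q) ≠ firstL (P⁻¹ * p)
  · obtain ⟨h1, h2⟩ := behind hg h
    rw [if_pos h, ← hinv' _ _ h2, ← sum_shadow hadd hp.le hQ h2]
    simp only [h1, h, true_and, ne_eq, not_false_eq_true]
  · rw [if_neg h]
    exact Finset.sum_eq_zero fun q _ => if_neg fun h' => h h'.1

end Sphere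

/-! ### Existence of the extension -/

section Existence

open Filter Topology

variable {n r L : ℕ} {A : Fin r → Subgroup (F n)}

/-- Every word is a prefix of a boundary point: repeat its last letter. -/
lemma exists_extension {p : F n} (hp : p ≠ 1) : ∃ ξ : Boundary n, pre ξ (wlen p) = p := by
  have hl : 0 < (rword p).length := Nat.pos_of_ne_zero fun h => hp (wlen_eq_zero.1 h)
  have hred := isReduced_rword p
  rw [FreeGroup.IsReduced, List.isChain_iff_getElem] at hred
  have hred' : IsRed fun i => (rword p)[min i ((rword p).length - 1)]'(by omega) := by
    intro i
    rcases Nat.lt_or_ge (i + 1) (rword p).length with h | h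
    · have h1 := hred i h
      rw [reduced_pair_iff] at h1
      simpa [min_eq_left (show i + 1 ≤ (rword p).length - 1 by omega),
        min_eq_left (show i ≤ (rword p).length - 1 by omega)] using h1
    · have h1 : min (i + 1) ((rword p).length - 1) = (rword p).length - 1 := by omega
      have h2 : min i ((rword p).length - 1) = (rword p).length - 1 := by omega
      simp only [h1, h2]
      exact (linv_ne _).symm
  refine ⟨⟨_, hred'⟩, (wordPrefixOf_iff _ _).1 ?_⟩
  unfold wordPrefixOf
  apply List.ext_getElem
  · simp [bpre, wlen]
  · intro i h1 h2
    simp only [bpre, List.getElem_map, List.getElem_range,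
      min_eq_left (show i ≤ (rword p).length - 1 by omega)]

lemma nonempty_Zrel (hsys : IsSystem A) {p q : F n} (hpq : wlen p = wlen q)
    (hg : p⁻¹ * q ∈ FmA A L) : (Zrel A p q).Nonempty := by
  have hne := ne_of_good hg
  have hq : q ≠ 1 := by
    rintro rfl
    rw [wlen_one, wlen_eq_zero] at hpq
    exact hne hpq
  have hp : p ≠ 1 := by
    rintro rfl
    rw [wlen_one, eq_comm, wlen_eq_zero] at hpq
    exact hne hpq.symm
  obtain ⟨ξ, hξ⟩ := exists_extension hp
  obtain ⟨ζ, hζ⟩ := exists_extension hq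
  have hz : s(ξ, ζ) ∈ Zset p q := (mk_mem_Zset_of_wlen_eq hne hpq rfl).2
    (Or.inl ⟨by rw [← hpq]; exact hξ, hζ⟩)
  exact ⟨⟨_, Zset_subset_relSet hsys hg hz⟩, hz⟩

/-- The value of `f` at a chosen point of the box of `[p, q]` (zero if the box is empty). -/
def sample (A : Fin r → Subgroup (F n)) (p q : F n) (f : ↥(relSet A) → ℝ) : ℝ :=
  if h : (Zrel A p q).Nonempty then f h.some else 0

/-- The Riemann sum of `f` over the boxes of level `M`, with the mass of a box prescribed by `η`.
Each box is counted twice, as `[p, q]` and as `[q, p]`. -/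
def rsum (A : Fin r → Subgroup (F n)) (L : ℕ) (η : F n → NNReal) (M : ℕ)
    (f : ↥(relSet A) → ℝ) : ℝ :=
  (1 / 2) * ∑ p ∈ sphere n M, ∑ q ∈ sphere n M,
    if p⁻¹ * q ∈ FmA A L then (η (p⁻¹ * q) : ℝ) * sample A p q f else 0

lemma sample_add (p q : F n) (f g : ↥(relSet A) → ℝ) :
    sample A p q (f + g) = sample A p q f + sample A p q g := by
  unfold sample; split_ifs <;> simp

lemma sample_smul (p q : F n) (c : ℝ) (f : ↥(relSet A) → ℝ) :
    sample A p q (c • f) = c * sample A p q f := by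
  unfold sample; split_ifs <;> simp

lemma sample_mono (p q : F n) {f g : ↥(relSet A) → ℝ} (h : ∀ x, f x ≤ g x) :
    sample A p q f ≤ sample A p q g := by
  unfold sample; split_ifs
  · exact h _
  · exact le_rfl

lemma rsum_add (η : F n → NNReal) (M : ℕ) (f g : ↥(relSet A) → ℝ) :
    rsum A L η M (f + g) = rsum A L η M f + rsum A L η M g := by
  unfold rsum
  rw [← mul_add, ← Finset.sum_add_distrib]
  congr 1
  refine Finset.sum_congr rfl fun p _ => ?_
  rw [← Finset.sum_add_distrib]
  refine Finset.sum_congr rfl fun q _ => ?_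
  split_ifs
  · rw [sample_add, mul_add]
  · simp

lemma rsum_smul (η : F n → NNReal) (M : ℕ) (c : ℝ) (f : ↥(relSet A) → ℝ) :
    rsum A L η M (c • f) = c * rsum A L η M f := by
  unfold rsum
  rw [mul_left_comm c]
  congr 1
  rw [Finset.mul_sum]
  refine Finset.sum_congr rfl fun p _ => ?_
  rw [Finset.mul_sum]
  refine Finset.sum_congr rfl fun q _ => ?_
  split_ifs
  · rw [sample_smul]; ring
  · simp

lemma rsum_mono (η : F n → NNReal) (M : ℕ) {f g : ↥(relSet A) → ℝ} (h : ∀ x, f x ≤ g x) :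
    rsum A L η M f ≤ rsum A L η M g := by
  unfold rsum
  refine mul_le_mul_of_nonneg_left (Finset.sum_le_sum fun p _ => Finset.sum_le_sum fun q _ => ?_)
    (by norm_num)
  split_ifs
  · exact mul_le_mul_of_nonneg_left (sample_mono p q h) (NNReal.coe_nonneg _)
  · exact le_rfl

/-- The Riemann sums of the indicator function of a box do not depend on the level. -/
lemma rsum_indicator (hsys : IsSystem A) {η : F n → NNReal}
    (hinv : ∀ w ∈ FmA A L, η w⁻¹ = η w)
    (hadd : ∀ w ∈ FmA A L, η w = ∑ b : Letter n,
      if wlen (w * letterE b) = wlen w + 1 then η (w * letterE b) else 0)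
    {M : ℕ} {P Q : F n} (hP : wlen P ≤ M) (hQ : wlen Q ≤ M) (hg : P⁻¹ * Q ∈ FmA A L) :
    rsum A L η M ((Zrel A P Q).indicator 1) = η (P⁻¹ * Q) := by
  have hPQ := ne_of_good hg
  set α : F n → Prop := fun p => firstL (P⁻¹ * Q) ≠ firstL (P⁻¹ * p) with hα
  set β : F n → Prop := fun q => firstL (Q⁻¹ * P) ≠ firstL (Q⁻¹ * q) with hβ
  have hexcl : ∀ p, α p → β p → False := fun p h1 h2 =>
    firstL_ne_of_shadow (u := 1) (v := P⁻¹ * Q) hPQ (one_mul _).symm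
      (by rw [wlen_one, zero_add]) h1 h2 rfl
  have hterm : ∀ p ∈ sphere n M, ∀ q ∈ sphere n M,
      (if p⁻¹ * q ∈ FmA A L then
        (η (p⁻¹ * q) : ℝ) * sample A p q ((Zrel A P Q).indicator 1) else 0) =
      ((if α p ∧ β q then η (p⁻¹ * q) else 0 : NNReal) : ℝ) +
        ((if α q ∧ β p then η (q⁻¹ * p) else 0 : NNReal) : ℝ) := by
    intro p hp q hq
    rw [mem_sphere] at hp hq
    by_cases h : p⁻¹ * q ∈ FmA A L
    · have hne : (Zrel A p q).Nonempty := nonempty_Zrel hsys (hp.trans hq.symm) h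
      rw [if_pos h, sample, dif_pos hne]
      have hmem := hne.some_mem
      have hiff : hne.some ∈ Zrel A P Q ↔ (α p ∧ β q) ∨ (α q ∧ β p) := by
        generalize hne.some = z at hmem
        obtain ⟨z, hz⟩ := z
        induction z with
        | _ ξ ζ =>
          change s(ξ, ζ) ∈ Zset p q at hmem
          change s(ξ, ζ) ∈ Zset P Q ↔ _
          rw [mk_mem_Zset_of_wlen_eq (ne_of_good h) hp hq] at hmem
          rw [mk_mem_Zset, mem_ShB_iff hPQ hP hQ, mem_ShB_iff hPQ hP hQ,
            mem_ShB_iff hPQ.symm hQ hP, mem_ShB_iff hPQ.symm hQ hP]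
          rcases hmem with ⟨h1, h2⟩ | ⟨h1, h2⟩ <;> rw [h1, h2]
          exact or_comm
      have hsym : η (q⁻¹ * p) = η (p⁻¹ * q) := by
        rw [← hinv _ h]; congr 1; group
      rw [hsym]
      by_cases h1 : α p ∧ β q
      · have h2 : ¬ (α q ∧ β p) := fun h2 => hexcl p h1.1 h2.2
        rw [Set.indicator_of_mem (hiff.2 (Or.inl h1)), if_pos h1, if_neg h2]
        simp
      · by_cases h2 : α q ∧ β p
        · rw [Set.indicator_of_mem (hiff.2 (Or.inr h2)), if_neg h1, if_pos h2]
          simp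
        · rw [Set.indicator_of_notMem (fun h' => (hiff.1 h').elim h1 h2), if_neg h1, if_neg h2]
          simp
    · rw [if_neg h, if_neg fun h1 => h (good_of_shadow hg h1.1 h1.2),
        if_neg fun h1 => h (good_symm (good_of_shadow hg h1.1 h1.2))]
      simp
  have hsum := congrArg NNReal.toReal (sum_sum_shadow hinv hadd hP hQ hg)
  rw [NNReal.coe_sum] at hsum
  simp only [NNReal.coe_sum] at hsum
  unfold rsum
  rw [Finset.sum_congr rfl fun p hp => Finset.sum_congr rfl fun q hq => hterm p hp q hq]
  simp only [Finset.sum_add_distrib]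
  have hsum' : ∑ p ∈ sphere n M, ∑ q ∈ sphere n M,
      ((if α q ∧ β p then η (q⁻¹ * p) else 0 : NNReal) : ℝ) = η (P⁻¹ * Q) := by
    rw [Finset.sum_comm]; exact hsum
  rw [hsum', hsum]
  ring

/-- A compactly supported function is dominated by a combination of indicators of boxes, so its
Riemann sums are eventually bounded. -/
lemma exists_rsum_bound (hsys : IsSystem A) (hdiam : DiamBound A L) {η : F n → NNReal}
    (hinv : ∀ w ∈ FmA A L, η w⁻¹ = η w)
    (hadd : ∀ w ∈ FmA A L, η w = ∑ b : Letter n,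
      if wlen (w * letterE b) = wlen w + 1 then η (w * letterE b) else 0)
    {f : ↥(relSet A) → ℝ} (hf : Continuous f) (hc : HasCompactSupport f) :
    ∃ C : ℝ, ∀ᶠ M in atTop, |rsum A L η M f| ≤ C := by
  obtain ⟨C, hC⟩ := hf.bounded_above_of_compact_support hc
  -- finitely many boxes cover the support
  have hcov : ∀ x : ↥(relSet A), ∃ PQ : F n × F n, PQ.1⁻¹ * PQ.2 ∈ FmA A L ∧
      x ∈ Zrel A PQ.1 PQ.2 := by
    intro x
    obtain ⟨m₀, h⟩ := exists_mem_Zset hsys hdiam x.2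
    obtain ⟨P, Q, -, -, hg, hPQ⟩ := h m₀ le_rfl
    exact ⟨(P, Q), hg, hPQ⟩
  choose PQ hPQ hxPQ using hcov
  obtain ⟨t, -, ht⟩ := hc.isCompact.elim_nhds_subcover (fun x => Zrel A (PQ x).1 (PQ x).2)
    fun x _ => (isOpen_Zrel _ _).mem_nhds (hxPQ x)
  set b : ↥(relSet A) → ℝ := C • ∑ x ∈ t, (Zrel A (PQ x).1 (PQ x).2).indicator 1 with hb
  have hC0 : ∀ x : ↥(relSet A), 0 ≤ C := fun x => (norm_nonneg _).trans (hC x)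
  have hind : ∀ x y : ↥(relSet A), (0 : ℝ) ≤ (Zrel A (PQ x).1 (PQ x).2).indicator 1 y := fun x y =>
    Set.indicator_nonneg (fun _ _ => zero_le_one) y
  have hfb : ∀ y, |f y| ≤ b y := by
    intro y
    rw [hb, Pi.smul_apply, Finset.sum_apply, smul_eq_mul]
    by_cases hy : f y = 0
    · rw [hy, abs_zero]
      exact mul_nonneg (hC0 y) (Finset.sum_nonneg fun x _ => hind x y)
    · have h1 := ht (subset_tsupport f hy)
      rw [Set.mem_iUnion₂] at h1
      obtain ⟨x, hx, hxy⟩ := h1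
      have h2 : (1 : ℝ) ≤ ∑ x ∈ t, (Zrel A (PQ x).1 (PQ x).2).indicator 1 y := by
        refine le_trans ?_ (Finset.single_le_sum (fun x _ => hind x y) hx)
        rw [Set.indicator_of_mem hxy]; rfl
      calc |f y| ≤ C * 1 := by rw [mul_one]; exact hC y
        _ ≤ _ := mul_le_mul_of_nonneg_left h2 (hC0 y)
  refine ⟨C * ∑ x ∈ t, (η ((PQ x).1⁻¹ * (PQ x).2) : ℝ), ?_⟩
  filter_upwards [eventually_ge_atTop (t.sup fun x => max (wlen (PQ x).1) (wlen (PQ x).2))]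
    with M hM
  have hlev : ∀ x ∈ t, wlen (PQ x).1 ≤ M ∧ wlen (PQ x).2 ≤ M := by
    intro x hx
    have h1 := (Finset.le_sup (f := fun x => max (wlen (PQ x).1) (wlen (PQ x).2)) hx).trans hM
    exact ⟨(le_max_left _ _).trans h1, (le_max_right _ _).trans h1⟩
  have hsum : ∀ s : Finset ↥(relSet A), s ⊆ t →
      rsum A L η M (∑ x ∈ s, (Zrel A (PQ x).1 (PQ x).2).indicator 1) =
        ∑ x ∈ s, (η ((PQ x).1⁻¹ * (PQ x).2) : ℝ) := by
    intro s
    induction s using Finset.induction_on with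
    | empty =>
      intro _
      have h0 := rsum_smul (A := A) (L := L) η M 0 0
      rw [zero_smul, zero_mul] at h0
      rw [Finset.sum_empty, Finset.sum_empty, h0]
    | insert x s hx ih =>
      intro hs
      have hxt : x ∈ t := hs (Finset.mem_insert_self _ _)
      rw [Finset.sum_insert hx, Finset.sum_insert hx, rsum_add,
        ih ((Finset.subset_insert _ _).trans hs),
        rsum_indicator hsys hinv hadd (hlev x hxt).1 (hlev x hxt).2 (hPQ x)]
  have hbs : rsum A L η M b = C * ∑ x ∈ t, (η ((PQ x).1⁻¹ * (PQ x).2) : ℝ) := by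
    rw [hb, rsum_smul, hsum t subset_rfl]
  rw [← hbs, abs_le]
  constructor
  · have h1 := rsum_smul (A := A) (L := L) η M (-1) b
    rw [neg_one_mul] at h1
    rw [← h1]
    refine rsum_mono η M fun y => ?_
    rw [Pi.smul_apply, smul_eq_mul, neg_one_mul]
    exact (abs_le.1 (hfb y)).1
  · exact rsum_mono η M fun y => (abs_le.1 (hfb y)).2

open CompactlySupported in
/-- A Radon measure with the prescribed values on boxes: the Riesz measure of the limit of the
Riemann sums along a nonprincipal ultrafilter. -/
lemma exists_measure (hsys : IsSystem A) (hdiam : DiamBound A L) {η : F n → NNReal}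
    (hinv : ∀ w ∈ FmA A L, η w⁻¹ = η w)
    (hadd : ∀ w ∈ FmA A L, η w = ∑ b : Letter n,
      if wlen (w * letterE b) = wlen w + 1 then η (w * letterE b) else 0) :
    ∃ μ : Measure ↥(relSet A), μ.Regular ∧
      ∀ P Q : F n, P⁻¹ * Q ∈ FmA A L → μ (Zrel A P Q) = η (P⁻¹ * Q) := by
  have := locallyCompactSpace_relSet hsys hdiam
  have hlim : ∀ f : C_c(↥(relSet A), ℝ), ∃ l : ℝ,
      Tendsto (fun M => rsum A L η M f) (hyperfilter ℕ) (𝓝 l) := by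
    intro f
    obtain ⟨C, hC⟩ := exists_rsum_bound hsys hdiam hinv hadd f.continuous f.hasCompactSupport
    obtain ⟨l, -, hl⟩ := (isCompact_Icc (a := -C) (b := C)).ultrafilter_le_nhds
      ((hyperfilter ℕ).map fun M => rsum A L η M f) (by
        rw [Ultrafilter.coe_map, le_principal_iff, mem_map]
        filter_upwards [Nat.hyperfilter_le_atTop hC] with M hM
        exact abs_le.1 hM)
    exact ⟨l, hl⟩
  choose Λ₀ hΛ₀ using hlim
  let Λ₁ : C_c(↥(relSet A), ℝ) →ₗ[ℝ] ℝ :=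
    { toFun := Λ₀
      map_add' := fun f g => tendsto_nhds_unique (hΛ₀ (f + g)) (by
        have := (hΛ₀ f).add (hΛ₀ g)
        simp only [← rsum_add] at this
        exact this)
      map_smul' := fun c f => tendsto_nhds_unique (hΛ₀ (c • f)) (by
        have := (hΛ₀ f).const_mul c
        simp only [← rsum_smul] at this
        exact this) }
  let Λ : C_c(↥(relSet A), ℝ) →ₚ[ℝ] ℝ := PositiveLinearMap.mk₀ Λ₁ fun f hf => by
    refine ge_of_tendsto' (hΛ₀ f) fun M => ?_
    have h0 := rsum_smul (A := A) (L := L) η M 0 0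
    rw [zero_smul, zero_mul] at h0
    rw [← h0]
    exact rsum_mono η M hf
  refine ⟨RealRMK.rieszMeasure Λ, inferInstance, fun P Q hg => ?_⟩
  have hcont : Continuous ((Zrel A P Q).indicator (1 : ↥(relSet A) → ℝ)) :=
    continuous_one.indicator (by
      rw [IsClopen.frontier_eq ⟨isClosed_Zrel P Q, isOpen_Zrel P Q⟩]
      exact fun _ h => h.elim)
  have hts : tsupport ((Zrel A P Q).indicator (1 : ↥(relSet A) → ℝ)) ⊆ Zrel A P Q :=
    closure_minimal Set.support_indicator_subset (isClosed_Zrel P Q)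
  let f : C_c(↥(relSet A), ℝ) :=
    { toFun := (Zrel A P Q).indicator 1
      continuous_toFun := hcont
      hasCompactSupport' := (isCompact_Zrel hsys hg).of_isClosed_subset (isClosed_tsupport _) hts }
  have hΛf : Λ f = η (P⁻¹ * Q) := by
    refine tendsto_nhds_unique (hΛ₀ f) (tendsto_const_nhds.congr' ?_)
    filter_upwards [Nat.hyperfilter_le_atTop
      (eventually_ge_atTop (max (wlen P) (wlen Q)))] with M hM
    exact (rsum_indicator hsys hinv hadd ((le_max_left _ _).trans hM)
      ((le_max_right _ _).trans hM) hg).symm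
  have h01 : ∀ x, 0 ≤ f x ∧ f x ≤ 1 := fun x =>
    ⟨Set.indicator_nonneg (fun _ _ => zero_le_one) x,
      Set.indicator_le_self' (fun _ _ => zero_le_one) x⟩
  have h1 : ∀ x ∈ Zrel A P Q, f x = 1 := fun x hx => Set.indicator_of_mem hx _
  have hη : ENNReal.ofReal (Λ f) = η (P⁻¹ * Q) := by
    rw [hΛf, ENNReal.ofReal_coe_nnreal]
  apply le_antisymm
  · rw [← hη]
    exact RealRMK.rieszMeasure_le_of_eq_one Λ (fun x => (h01 x).1) (isCompact_Zrel hsys hg) h1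
  · rw [← hη]
    exact RealRMK.le_rieszMeasure_tsupport_subset Λ h01 hts

end Existence

/-- Kolmogorov-type extension: an inversion-invariant additive function on F_n − 𝒜
extends uniquely to a relative current. -/
theorem statement_9 (n r L : ℕ) (hn : 2 ≤ n) (A : Fin r → Subgroup (F n))
    (hsys : IsSystem A) (hmal : SystemMalnormal A) (hL : 1 ≤ L)
    (hdiam : DiamBound A L) (hbase : ∀ i, (1 : F n) ∈ treeVerts (A i))
    (η : F n → NNReal)
    (hinv : ∀ w ∈ FmA A L, η w⁻¹ = η w)
    (hadd : ∀ w ∈ FmA A L,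
      η w = ∑ b : Letter n,
        if wlen (w * letterE b) = wlen w + 1 then η (w * letterE b) else 0) :
    ∃! μ : Measure ↥(relSet A),
      IsRelCurrent A μ ∧ ∀ w ∈ FmA A L, μ (relCyl A w) = (η w : ENNReal) := by
  obtain ⟨μ, hreg, hμ⟩ := exists_measure hsys hdiam hinv hadd
  have hinvar : ∀ g : F n, μ = μ.map (relAct A g) := by
    intro g
    refine measure_ext_boxes hsys hdiam (fun P Q _ hg => ?_) fun P Q _ hg => ?_
    · rw [hμ P Q hg]; exact ENNReal.coe_ne_top
    · have e : (g⁻¹ * P)⁻¹ * (g⁻¹ * Q) = P⁻¹ * Q := by group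
      rw [Measure.map_apply (measurable_relAct hsys hdiam g) (isOpen_Zrel P Q).measurableSet,
        relAct_preimage_Zrel hsys hdiam g (ne_of_good hg), hμ P Q hg, hμ _ _ (by rwa [e]), e]
  refine ⟨μ, ⟨⟨fun g s hs => ?_, hreg⟩, fun w hw => ?_⟩, ?_⟩
  · rw [← Measure.map_apply (measurable_relAct hsys hdiam g) hs, ← hinvar g]
  · have h := hμ 1 w (by rwa [inv_one, one_mul])
    rw [inv_one, one_mul] at h
    rw [relCyl, cylinder_eq_Zset (FmA_ne_one hw)]
    exact h
  · rintro ν ⟨⟨hν, -⟩, hνη⟩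
    refine (measure_ext_boxes hsys hdiam (fun P Q _ hg => ?_) fun P Q _ hg => ?_).symm
    · rw [hμ P Q hg]; exact ENNReal.coe_ne_top
    · rw [hμ P Q hg, measure_Zrel hsys hdiam hν hg, hνη _ hg]

end RelCurr
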